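/- arXiv:2106.15956 — 3 statements merged into one kernel-verified Lean document; each statement's English description precedes it below -/
import Mathlib

section
/- The set U = {φ ∈ C^1_n : Lφ ∈ W and φ̂ ∈ V} is an open subset of C^1_n, the map f : U → ℝ^n, f(φ) = g(φ̂), is continuously differentiable and has property (e), and for every μ ∈ {1,…,n}, every φ ∈ U and every χ ∈ C^1_n the derivative of the μ-th component satisfies Df_μ(φ)χ = Σ_{k=1}^{𝐤} Σ_{ν=1}^{n} ∂_{(k-1)n+ν} g_μ(φ̂) [ χ_ν(−d_k(Lφ)) − φ_ν'(−d_k(Lφ)) · Dd_k(Lφ)Lχ ]. -/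
set_option linter.unusedSectionVars false

open Set

noncomputable section

/-- The compact interval `[-r,0]`. -/
abbrev Icc0 (r : ℝ) : Set ℝ := Set.Icc (-r) 0

/-- Extension of a continuous map on `[-r,0]` to `ℝ`, by the value `0` outside. -/
def extFun {r : ℝ} {E : Type*} [TopologicalSpace E] [Zero E] (φ : C(Icc0 r, E)) : ℝ → E :=
  fun t => if h : t ∈ Icc0 r then φ ⟨t, h⟩ else 0

section extlemmas

variable {r : ℝ} {E : Type*} [NormedAddCommGroup E] [NormedSpace ℝ E]

lemma extFun_add (φ ψ : C(Icc0 r, E)) : extFun (φ + ψ) = extFun φ + extFun ψ := by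
  funext t; by_cases h : t ∈ Icc0 r <;> simp [extFun, h]

lemma extFun_zero : extFun (0 : C(Icc0 r, E)) = 0 := by
  funext t; by_cases h : t ∈ Icc0 r <;> simp [extFun, h]

lemma extFun_smul (c : ℝ) (φ : C(Icc0 r, E)) : extFun (c • φ) = c • extFun φ := by
  funext t; by_cases h : t ∈ Icc0 r <;> simp [extFun, h]

end extlemmas

/-- The space `C¹([-r,0],E)`, realized as the closed subspace of pairs `(φ, φ')` in
`C([-r,0],E) × C([-r,0],E)` such that `φ` is differentiable on `[-r,0]` with derivative `φ'`. -/
def C1sub (r : ℝ) (E : Type*) [NormedAddCommGroup E] [NormedSpace ℝ E] :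
    Submodule ℝ (C(Icc0 r, E) × C(Icc0 r, E)) where
  carrier := {p | ∀ t ∈ Icc0 r, HasDerivWithinAt (extFun p.1) (extFun p.2 t) (Icc0 r) t}
  add_mem' := by
    intro p q hp hq t ht
    have h := (hp t ht).add (hq t ht)
    have e1 : extFun (p + q).1 = fun s => extFun p.1 s + extFun q.1 s := by
      simp [Prod.fst_add, extFun_add]; rfl
    have e2 : extFun (p + q).2 t = extFun p.2 t + extFun q.2 t := by
      simp [Prod.snd_add, extFun_add]
    rw [e1, e2]; exact h
  zero_mem' := by
    intro t ht
    have e1 : extFun (0 : C(Icc0 r, E) × C(Icc0 r, E)).1 = fun _ : ℝ => (0 : E) := by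
      simp [extFun_zero]; rfl
    have e2 : extFun (0 : C(Icc0 r, E) × C(Icc0 r, E)).2 t = 0 := by
      simp [extFun_zero]
    rw [e1, e2]; exact hasDerivWithinAt_const _ _ _
  smul_mem' := by
    intro c p hp t ht
    have h := (hp t ht).const_smul c
    have e1 : extFun (c • p).1 = fun s => c • extFun p.1 s := by
      simp [Prod.smul_fst, extFun_smul]; rfl
    have e2 : extFun (c • p).2 t = c • extFun p.2 t := by
      simp [Prod.smul_snd, extFun_smul]
    rw [e1, e2]; exact h

/-- The Banach space `C¹([-r,0],E)`. -/
abbrev C1 (r : ℝ) (E : Type*) [NormedAddCommGroup E] [NormedSpace ℝ E] := ↥(C1sub r E)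

section C1ops

variable {r : ℝ} {E : Type*} [NormedAddCommGroup E] [NormedSpace ℝ E]

/-- Evaluation `φ(t)` of `φ ∈ C¹([-r,0],E)` (extended by `0` outside `[-r,0]`). -/
def evC (φ : C1 r E) (t : ℝ) : E := extFun φ.1.1 t

/-- Evaluation `φ'(t)` of the derivative of `φ ∈ C¹([-r,0],E)`. -/
def dvC (φ : C1 r E) (t : ℝ) : E := extFun φ.1.2 t

end C1ops

/-- The continuous linear map `ℝ → (Fin n → ℝ)` sending `x` to the vector `x·e_ν`. -/
def sCLM (n : ℕ) (ν : Fin n) : ℝ →L[ℝ] (Fin n → ℝ) :=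
  ContinuousLinearMap.pi (fun j => if j = ν then ContinuousLinearMap.id ℝ ℝ else 0)

/-- `ψ · e_ν` for a continuous map `ψ`. -/
def CMsingle {r : ℝ} {n : ℕ} (ν : Fin n) (φ : C(Icc0 r, ℝ)) : C(Icc0 r, Fin n → ℝ) :=
  ⟨fun t => sCLM n ν (φ t), (sCLM n ν).continuous.comp φ.continuous⟩

lemma extFun_CMsingle {r : ℝ} {n : ℕ} (ν : Fin n) (φ : C(Icc0 r, ℝ)) (t : ℝ) :
    extFun (CMsingle ν φ) t = sCLM n ν (extFun φ t) := by
  by_cases h : t ∈ Icc0 r <;> simp [extFun, CMsingle, h]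

/-- `ψ · e_ν ∈ C¹([-r,0],ℝⁿ)` for a scalar function `ψ ∈ C¹([-r,0],ℝ)`. -/
def singleC1 {r : ℝ} {n : ℕ} (ν : Fin n) (φ : C1 r ℝ) : C1 r (Fin n → ℝ) :=
  ⟨(CMsingle ν φ.1.1, CMsingle ν φ.1.2), by
    intro t ht
    have h := ((sCLM n ν).hasFDerivAt).comp_hasDerivWithinAt t (φ.2 t ht)
    have e1 : extFun (CMsingle ν φ.1.1) = (sCLM n ν) ∘ (extFun φ.1.1) := by
      funext s; exact extFun_CMsingle ν φ.1.1 s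
    rw [show (CMsingle ν φ.1.1, CMsingle ν φ.1.2).1 = CMsingle ν φ.1.1 from rfl,
      show (CMsingle ν φ.1.1, CMsingle ν φ.1.2).2 = CMsingle ν φ.1.2 from rfl,
      e1, extFun_CMsingle]
    exact h⟩

/-- The linear map `ℝⁿ → C¹([-r,0],ℝⁿ)`, `x ↦ Σ_ν x_ν ψ_ν · e_ν` (the map `Y·x`). -/
def Ymap {r : ℝ} {n : ℕ} (ψ : Fin n → C1 r ℝ) : (Fin n → ℝ) →ₗ[ℝ] C1 r (Fin n → ℝ) where
  toFun x := ∑ ν, x ν • singleC1 ν (ψ ν)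
  map_add' x y := by simp [add_smul, Finset.sum_add_distrib]
  map_smul' c x := by simp [smul_smul, Finset.smul_sum]

/-- The closed subspace `X₀ = {φ ∈ C¹ : φ'(0) = 0}`. -/
def X0sub (r : ℝ) (n : ℕ) : Submodule ℝ (C1 r (Fin n → ℝ)) where
  carrier := {φ | dvC φ 0 = 0}
  add_mem' := by
    intro φ ψ hφ hψ
    have : dvC (φ + ψ) 0 = dvC φ 0 + dvC ψ 0 := by
      simp [dvC, extFun_add]
    rw [Set.mem_setOf_eq] at *
    rw [this, hφ, hψ, add_zero]
  zero_mem' := by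
    show dvC (0 : C1 r (Fin n → ℝ)) 0 = 0
    simp [dvC, extFun_zero]
  smul_mem' := by
    intro c φ hφ
    have : dvC (c • φ) 0 = c • dvC φ 0 := by simp [dvC, extFun_smul]
    rw [Set.mem_setOf_eq] at *
    rw [this, hφ, smul_zero]

/-- The projection-like map `R φ = φ − Y·φ'(0)`. -/
def RKmap {r : ℝ} {n : ℕ} (ψ : Fin n → C1 r ℝ) (φ : C1 r (Fin n → ℝ)) : C1 r (Fin n → ℝ) :=
  φ - Ymap ψ (dvC φ 0)

section diffeos

variable {E : Type*} [NormedAddCommGroup E] [NormedSpace ℝ E]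
variable {E' : Type*} [NormedAddCommGroup E'] [NormedSpace ℝ E']

/-- `f` defines a `C¹`-diffeomorphism from `s` onto `t`: `f` is continuously differentiable
on `s`, injective on `s`, maps `s` onto `t`, and has a continuously differentiable inverse. -/
def IsC1DiffeoOn (f : E → E') (s : Set E) (t : Set E') : Prop :=
  ContDiffOn ℝ 1 f s ∧ Set.InjOn f s ∧ f '' s = t ∧
    ∃ g : E' → E, ContDiffOn ℝ 1 g t ∧ Set.InvOn g f s t

/-- The tangent cone of `X ⊆ E` at `x`: all velocities `c'(0)` of continuously differentiable
curves in `X` through `x`. -/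
def tangentSet (X : Set E) (x : E) : Set E :=
  {v | ∃ (c : ℝ → E) (ε : ℝ), 0 < ε ∧ ContDiffOn ℝ 1 c (Set.Ioo (-ε) ε) ∧
      (∀ s ∈ Set.Ioo (-ε) ε, c s ∈ X) ∧ c 0 = x ∧ HasDerivWithinAt c v (Set.Ioo (-ε) ε) 0}

/-- `X` is a continuously differentiable submanifold of codimension `m` of `E`. -/
def IsC1SubmanifoldCodim (X : Set E) (m : ℕ) : Prop :=
  ∀ x ∈ X, ∃ (O : Set E) (Φ : E → E) (H Q : Submodule ℝ E),
    IsOpen O ∧ x ∈ O ∧ IsClosed (H : Set E) ∧ IsCompl H Q ∧ Module.finrank ℝ Q = m ∧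
    IsOpen (Φ '' O) ∧ IsC1DiffeoOn Φ O (Φ '' O) ∧ Φ '' (X ∩ O) = (H : Set E) ∩ (Φ '' O)

/-- `X` is a continuously differentiable submanifold of `E`. -/
def IsC1Submanifold (X : Set E) : Prop :=
  ∀ x ∈ X, ∃ (O : Set E) (Φ : E → E) (H : Submodule ℝ E),
    IsOpen O ∧ x ∈ O ∧ IsClosed (H : Set E) ∧
    IsOpen (Φ '' O) ∧ IsC1DiffeoOn Φ O (Φ '' O) ∧ Φ '' (X ∩ O) = (H : Set E) ∩ (Φ '' O)

/-- `A` is an almost graph over `H`. -/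
def IsAlmostGraphOver (A : Set E) (H : Set E) : Prop :=
  ∃ (dm : Set E) (α : E → E), dm ⊆ H ∧ ContDiffOn ℝ 1 α dm ∧
    (∀ ζ ∈ dm ∩ A, α ζ = 0) ∧ (∀ ζ ∈ dm \ A, α ζ ∉ H) ∧
    IsC1DiffeoOn (fun ζ => ζ + α ζ) dm A

end diffeos

/-- The data of the delay differential system
`x'(t) = g(x(t-d_1(Lx_t)),…,x(t-d_kk(Lx_t)))`. -/
structure Setting (r : ℝ) (n kk : ℕ) (F : Type*) [NormedAddCommGroup F] [NormedSpace ℝ F] where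
  /-- The continuous linear map `L : C([-r,0],ℝⁿ) → F`. -/
  L : C(Icc0 r, Fin n → ℝ) →L[ℝ] F
  /-- The open set `W ⊆ F`. -/
  W : Set F
  Wopen : IsOpen W
  /-- The delay functions `d_k : W → [0,r]`. -/
  d : Fin kk → F → ℝ
  d_smooth : ∀ k, ContDiffOn ℝ 1 (d k) W
  d_mem : ∀ k, ∀ w ∈ W, d k w ∈ Set.Icc (0:ℝ) r
  /-- The open set `V ⊆ (ℝⁿ)^kk`. -/
  V : Set (Fin kk → Fin n → ℝ)
  Vopen : IsOpen V
  /-- The right hand side function `g : V → ℝⁿ`. -/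
  g : (Fin kk → Fin n → ℝ) → Fin n → ℝ
  g_smooth : ContDiffOn ℝ 1 g V

namespace Setting

variable {r : ℝ} {n kk : ℕ} {F : Type*} [NormedAddCommGroup F] [NormedSpace ℝ F]
variable (S : Setting r n kk F)

/-- `L` applied to (the `C⁰`-part of) `φ ∈ C¹`. -/
def Lof (φ : C1 r (Fin n → ℝ)) : F := S.L φ.1.1

/-- `φ̂ = (φ(-d_1(Lφ)),…,φ(-d_kk(Lφ)))`. -/
def hat (φ : C1 r (Fin n → ℝ)) : Fin kk → Fin n → ℝ := fun k => evC φ (-(S.d k (S.Lof φ)))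

/-- The domain `U = {φ ∈ C¹ : Lφ ∈ W, φ̂ ∈ V}`. -/
def U : Set (C1 r (Fin n → ℝ)) := {φ | S.Lof φ ∈ S.W ∧ S.hat φ ∈ S.V}

/-- The right hand side `f(φ) = g(φ̂)`. -/
def fmap (φ : C1 r (Fin n → ℝ)) : Fin n → ℝ := S.g (S.hat φ)

/-- The solution manifold `X_f = {φ ∈ U : φ'(0) = f(φ)}`. -/
def Xf : Set (C1 r (Fin n → ℝ)) := {φ | φ ∈ S.U ∧ dvC φ 0 = S.fmap φ}

/-- `W_J = {w ∈ W : d_j(w)=0 for j∈J, d_k(w)>0 for k∉J}`. -/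
def WJ (J : Finset (Fin kk)) : Set F :=
  {w | w ∈ S.W ∧ (∀ j ∈ J, S.d j w = 0) ∧ ∀ k ∉ J, 0 < S.d k w}

/-- `W^J = {w ∈ W : d_k(w)>0 for k∉J}`. -/
def WupJ (J : Finset (Fin kk)) : Set F :=
  {w | w ∈ S.W ∧ ∀ k ∉ J, 0 < S.d k w}

/-- `U_J = U ∩ L⁻¹(W_J)`. -/
def UJ (J : Finset (Fin kk)) : Set (C1 r (Fin n → ℝ)) := {φ | φ ∈ S.U ∧ S.Lof φ ∈ S.WJ J}

/-- `U^J = U ∩ L⁻¹(W^J)`. -/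
def UupJ (J : Finset (Fin kk)) : Set (C1 r (Fin n → ℝ)) := {φ | φ ∈ S.U ∧ S.Lof φ ∈ S.WupJ J}

/-- `X_{fJ} = X_f ∩ U_J`. -/
def XfJ (J : Finset (Fin kk)) : Set (C1 r (Fin n → ℝ)) := S.Xf ∩ S.UJ J

/-- Hypothesis (b): `g` is bounded. -/
def HypB : Prop := ∃ M, ∀ v ∈ S.V, ‖S.g v‖ ≤ M

/-- Hypothesis (d1b): `d₁ = 0` on `W` and `g` is bounded on subsets of `V` with bounded
first component. -/
def HypD1B (hk : 0 < kk) : Prop :=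
  (∀ w ∈ S.W, S.d ⟨0, hk⟩ w = 0) ∧
  ∀ B : Set (Fin n → ℝ), Bornology.IsBounded B →
    Bornology.IsBounded (S.g '' {v | v ∈ S.V ∧ v ⟨0, hk⟩ ∈ B})

/-- The partial derivative `∂_{(k-1)n+ν} g_μ (φ̂)`. -/
def dgCoeff (φ : C1 r (Fin n → ℝ)) (k : Fin kk) (ν : Fin n) (μ : Fin n) : ℝ :=
  fderivWithin ℝ S.g S.V (S.hat φ) (Pi.single k (Pi.single ν 1)) μ

/-- The right hand side of the formula for `Df_μ(φ)χ`. -/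
def dFormula (φ χ : C1 r (Fin n → ℝ)) (μ : Fin n) : ℝ :=
  ∑ k, ∑ ν, S.dgCoeff φ k ν μ *
    (evC χ (-(S.d k (S.Lof φ))) ν -
      dvC φ (-(S.d k (S.Lof φ))) ν * fderivWithin ℝ (S.d k) S.W (S.Lof φ) (S.Lof χ))

/-- The map `R^J(φ) = φ − Y_J(Lφ)·φ'(0)` of Section 4 of the paper. -/
def RJmap (y : Fin n → F → C1 r ℝ) (φ : C1 r (Fin n → ℝ)) : C1 r (Fin n → ℝ) :=
  φ - Ymap (fun ν => y ν (S.Lof φ)) (dvC φ 0)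

end Setting


/-- Abstract version of `C¹`: a normed space with function and derivative maps. -/
structure APair (X : Type*) [NormedAddCommGroup X] [NormedSpace ℝ X] (r : ℝ)
    (E : Type*) [NormedAddCommGroup E] [NormedSpace ℝ E] where
  /-- the function -/
  A : X →L[ℝ] C(Icc0 r, E)
  /-- the derivative -/
  B : X →L[ℝ] C(Icc0 r, E)
  h : ∀ x, ∀ t ∈ Icc0 r, HasDerivWithinAt (extFun (A x)) (extFun (B x) t) (Icc0 r) t

section helpers

variable {E : Type*} [NormedAddCommGroup E] [NormedSpace ℝ E] {r : ℝ}

/-- Clamp to the interval. -/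
def prj (hr : 0 < r) (t : ℝ) : Icc0 r := Set.projIcc (-r) 0 (by linarith) t

lemma prj_cont (hr : 0 < r) : Continuous (prj hr) :=
  continuous_projIcc (h := by linarith)

lemma extFun_eq_prj (hr : 0 < r) (φ : C(Icc0 r, E)) {t : ℝ} (ht : t ∈ Icc0 r) :
    extFun φ t = φ (prj hr t) := by
  simp [extFun, prj, ht, Set.projIcc_of_mem _ ht]

lemma cont_dprj (hr : 0 < r) (φ : C(Icc0 r, E)) : Continuous (fun s => φ (prj hr s)) :=
  φ.continuous.comp (prj_cont hr)

variable [CompleteSpace E] {X : Type*} [NormedAddCommGroup X] [NormedSpace ℝ X] (P : APair X r E)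

/-- The extension of a `C¹` function to the whole line. -/
def evx (hr : 0 < r) (φ : X) (t : ℝ) : E :=
  (P.A φ) (prj hr 0) + ∫ s in (0:ℝ)..t, (P.B φ) (prj hr s)

lemma evx_hasDerivAt (hr : 0 < r) (φ : X) (t : ℝ) :
    HasDerivAt (evx P hr φ) ((P.B φ) (prj hr t)) t := by
  have h := (cont_dprj hr (P.B φ)).integral_hasStrictDerivAt 0 t
  exact h.hasDerivAt.const_add _

lemma evx_eq (hr : 0 < r) (φ : X) {t : ℝ} (ht : t ∈ Icc0 r) : evx P hr φ t = extFun (P.A φ) t := by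
  have h0 : (0:ℝ) ∈ Icc0 r := ⟨by linarith, le_refl _⟩
  have hd : ∀ s ∈ Icc0 r, HasDerivWithinAt (fun s => evx P hr φ s - extFun (P.A φ) s) 0 (Icc0 r) s := by
    intro s hs
    have h1 := (evx_hasDerivAt P hr φ s).hasDerivWithinAt (s := Icc0 r)
    have h2 := P.h φ s hs
    have h3 := h1.sub h2
    rw [extFun_eq_prj hr _ hs, sub_self] at h3
    exact h3
  have := (convex_Icc (-r) 0).norm_image_sub_le_of_norm_hasDerivWithin_le (C := 0)
    (f := fun s => evx P hr φ s - extFun (P.A φ) s) hd (by simp) h0 ht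
  have h00 : evx P hr φ 0 - extFun (P.A φ) 0 = 0 := by
    simp [evx, extFun_eq_prj hr _ h0]
  rw [h00] at this
  simp only [sub_zero, zero_mul] at this
  exact sub_eq_zero.1 (norm_le_zero_iff.1 this)

lemma evx_sub_le (hr : 0 < r) (φ : X) (s t : ℝ) :
    ‖evx P hr φ t - evx P hr φ s‖ ≤ ‖P.B‖ * ‖φ‖ * |t - s| := by
  have e : evx P hr φ t - evx P hr φ s = ∫ u in s..t, (P.B φ) (prj hr u) := by
    have hc := cont_dprj hr (P.B φ)
    rw [← intervalIntegral.integral_interval_sub_left (a := 0) (hc.intervalIntegrable _ _)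
      (hc.intervalIntegrable _ _)]
    simp [evx]
  rw [e]
  apply intervalIntegral.norm_integral_le_of_norm_le_const
  intro u _
  exact ((P.B φ).norm_coe_le_norm _).trans (P.B.le_opNorm φ)

/-- `evx` as a continuous linear map in `φ`. -/
def evT (hr : 0 < r) (t : ℝ) : X →L[ℝ] E :=
  LinearMap.mkContinuous
    { toFun := fun φ => evx P hr φ t
      map_add' := by
        intro φ ψ
        have h := intervalIntegral.integral_add (μ := MeasureTheory.volume)
          ((cont_dprj hr (P.B φ)).intervalIntegrable 0 t)
          ((cont_dprj hr (P.B ψ)).intervalIntegrable 0 t)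
        simp only [evx, map_add, ContinuousMap.add_apply, h]
        abel
      map_smul' := by
        intro c φ
        simp only [evx, map_smul,
          ContinuousMap.smul_apply, intervalIntegral.integral_smul, smul_add, RingHom.id_apply] }
    (‖P.B‖ * |t| + ‖P.A‖) (by
      intro φ
      have h := evx_sub_le P hr φ 0 t
      have h0 : ‖evx P hr φ 0‖ ≤ ‖P.A‖ * ‖φ‖ := by
        simp only [evx, intervalIntegral.integral_same, add_zero]
        exact ((P.A φ).norm_coe_le_norm _).trans (P.A.le_opNorm φ)
      have h2 := norm_add_le (evx P hr φ t - evx P hr φ 0) (evx P hr φ 0)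
      rw [sub_add_cancel] at h2
      rw [sub_zero] at h
      show ‖evx P hr φ t‖ ≤ _
      have h3 : (‖P.B‖ * |t| + ‖P.A‖) * ‖φ‖ = ‖P.B‖ * ‖φ‖ * |t| + ‖P.A‖ * ‖φ‖ := by ring
      rw [h3]
      exact h2.trans (add_le_add h h0))

lemma evT_apply (hr : 0 < r) (t : ℝ) (φ : X) : evT P hr t φ = evx P hr φ t := rfl

lemma evT_cont (hr : 0 < r) : Continuous (evT P hr) := by
  have : LipschitzWith ‖P.B‖₊ (evT P hr) := by
    apply LipschitzWith.of_dist_le_mul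
    intro t s
    rw [dist_eq_norm, Real.dist_eq]
    apply ContinuousLinearMap.opNorm_le_bound _ (by positivity)
    intro φ
    have := evx_sub_le P hr φ s t
    simp only [sub_apply, evT_apply]
    refine this.trans (le_of_eq ?_)
    rw [coe_nnnorm]
    ring
  exact this.continuous

/-- Derivative of the joint evaluation. -/
def evD (hr : 0 < r) (p : X × ℝ) : X × ℝ →L[ℝ] E :=
  (evT P hr p.2).comp (ContinuousLinearMap.fst ℝ _ _) +
    (ContinuousLinearMap.snd ℝ _ _).smulRight ((P.B p.1) (prj hr p.2))

lemma evx_hasFDerivAt (hr : 0 < r) (p : X × ℝ) :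
    HasFDerivAt (fun q : X × ℝ => evx P hr q.1 q.2) (evD P hr p) p := by
  obtain ⟨φ, t⟩ := p
  have h1 : HasFDerivAt (fun q : X × ℝ => evx P hr φ q.2)
      ((ContinuousLinearMap.snd ℝ _ _).smulRight ((P.B φ) (prj hr t))) (φ, t) := by
    have := (evx_hasDerivAt P hr φ t).hasFDerivAt.comp (φ, t)
      (hasFDerivAt_snd (𝕜 := ℝ) (E := X) (F := ℝ) (p := (φ, t)))
    refine HasFDerivAt.congr_fderiv this ?_
    ext <;> simp
  have h2 : HasFDerivAt (fun q : X × ℝ => evx P hr q.1 t)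
      ((evT P hr t).comp (ContinuousLinearMap.fst ℝ _ _)) (φ, t) :=
    ((evT P hr t).comp (ContinuousLinearMap.fst ℝ (X) ℝ)).hasFDerivAt
  have h3 : HasFDerivAt (fun q : X × ℝ => evx P hr (q.1 - φ) q.2 - evx P hr (q.1 - φ) t)
      (0 : X × ℝ →L[ℝ] E) (φ, t) := by
    rw [hasFDerivAt_iff_isLittleO]
    have hO : (fun q : X × ℝ => evx P hr (q.1 - φ) q.2 - evx P hr (q.1 - φ) t)
        =O[nhds (φ, t)] (fun q => ‖q.1 - φ‖ * ‖q - (φ, t)‖) := by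
      apply Asymptotics.IsBigO.of_bound ‖P.B‖
      filter_upwards with q
      have := evx_sub_le P hr (q.1 - φ) t q.2
      have h4 : |q.2 - t| ≤ ‖q - (φ, t)‖ := norm_snd_le (q - (φ, t))
      rw [norm_mul, norm_norm, norm_norm, ← mul_assoc]
      exact this.trans (mul_le_mul_of_nonneg_left h4 (by positivity))
    have ho : (fun q : X × ℝ => ‖q.1 - φ‖ * ‖q - (φ, t)‖)
        =o[nhds (φ, t)] (fun q => 1 * ‖q - (φ, t)‖) := by
      apply Asymptotics.IsLittleO.mul_isBigO _ (Asymptotics.isBigO_refl _ _)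
      rw [Asymptotics.isLittleO_one_iff]
      have : Continuous (fun q : X × ℝ => ‖q.1 - φ‖) := by fun_prop
      have := this.tendsto (φ, t)
      simpa using this
    have := hO.trans_isLittleO ho
    simp only [one_mul] at this
    have h5 := this.of_norm_right
    have e0 : evx P hr (0 : X) t = 0 := (evT P hr t).map_zero
    simpa using h5
  have h := (h2.add h1).add h3
  have h' := h.sub_const (evx P hr φ t)
  have e : (fun q : X × ℝ => evx P hr q.1 q.2) = fun q : X × ℝ =>
      evx P hr q.1 t + evx P hr φ q.2 + (evx P hr (q.1 - φ) q.2 - evx P hr (q.1 - φ) t)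
        - evx P hr φ t := by
    funext q
    have a : ∀ s, evx P hr (q.1 - φ) s = evx P hr q.1 s - evx P hr φ s := fun s =>
      (evT P hr s).map_sub q.1 φ
    simp only [a]
    abel
  rw [e]
  refine HasFDerivAt.congr_fderiv h' ?_
  simp [evD]

lemma evx_contDiff (hr : 0 < r) : ContDiff ℝ 1 (fun q : X × ℝ => evx P hr q.1 q.2) := by
  rw [contDiff_one_iff_fderiv]
  refine ⟨fun p => (evx_hasFDerivAt P hr p).differentiableAt, ?_⟩
  have : fderiv ℝ (fun q : X × ℝ => evx P hr q.1 q.2) = evD P hr :=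
    funext fun p => (evx_hasFDerivAt P hr p).fderiv
  rw [this]
  have h1 : Continuous (fun p : X × ℝ => evT P hr p.2) :=
    (evT_cont P hr).comp continuous_snd
  have h2 : Continuous (fun p : X × ℝ => (P.B p.1) (prj hr p.2)) := by
    have a : Continuous (fun p : X × ℝ => (P.B p.1)) := by fun_prop
    have b : Continuous (fun p : X × ℝ => prj hr p.2) := (prj_cont hr).comp continuous_snd
    exact a.eval b
  have h3 : Continuous (fun p : X × ℝ =>
      (ContinuousLinearMap.snd ℝ (X) ℝ).smulRight ((P.B p.1) (prj hr p.2))) :=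
    ((ContinuousLinearMap.smulRightL ℝ (X × ℝ) E
      (ContinuousLinearMap.snd ℝ (X) ℝ)).continuous).comp h2
  exact (h1.clm_comp continuous_const).add h3

end helpers

namespace Setting

variable {r : ℝ} {n kk : ℕ} {F : Type*} [NormedAddCommGroup F] [NormedSpace ℝ F]
variable (S : Setting r n kk F)
variable {X : Type*} [NormedAddCommGroup X] [NormedSpace ℝ X] (P : APair X r (Fin n → ℝ))

/-- Abstract `Lof`. -/
def LofX (φ : X) : F := S.L (P.A φ)

/-- Abstract `hat`. -/
def hatX (φ : X) : Fin kk → Fin n → ℝ := fun k => extFun (P.A φ) (-(S.d k (S.LofX P φ)))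

/-- Abstract `U`. -/
def UX : Set X := {φ | S.LofX P φ ∈ S.W ∧ S.hatX P φ ∈ S.V}

/-- Abstract `fmap`. -/
def fmapX (φ : X) : Fin n → ℝ := S.g (S.hatX P φ)

/-- Abstract `dFormula`. -/
def dFormulaX (φ χ : X) (μ : Fin n) : ℝ :=
  ∑ k, ∑ ν, fderivWithin ℝ S.g S.V (S.hatX P φ) (Pi.single k (Pi.single ν 1)) μ *
    (extFun (P.A χ) (-(S.d k (S.LofX P φ))) ν -
      extFun (P.B φ) (-(S.d k (S.LofX P φ))) ν *
        fderivWithin ℝ (S.d k) S.W (S.LofX P φ) (S.LofX P χ))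

/-- `Lof` as a continuous linear map. -/
def LofL : X →L[ℝ] F :=
  S.L.comp P.A

lemma LofL_apply (φ : X) : (S.LofL P) φ = (S.LofX P) φ := rfl

lemma open_pre : IsOpen {φ | (S.LofX P) φ ∈ S.W} := S.Wopen.preimage (S.LofL P).continuous

lemma neg_d_mem (k : Fin kk) {w : F} (hw : w ∈ S.W) : -(S.d k w) ∈ Icc0 r := by
  have := S.d_mem k w hw
  exact ⟨by linarith [this.2], by linarith [this.1]⟩

lemma hat_eq (hr : 0 < r) {φ : X} (h : (S.LofX P) φ ∈ S.W) :
    (S.hatX P) φ = fun k => evx P hr φ (-(S.d k ((S.LofX P) φ))) := by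
  funext k
  exact (evx_eq P hr φ (S.neg_d_mem k h)).symm

lemma d_comp (k : Fin kk) :
    ContDiffOn ℝ 1 (fun φ => S.d k ((S.LofX P) φ)) {φ | (S.LofX P) φ ∈ S.W} :=
  (S.d_smooth k).comp (S.LofL P).contDiff.contDiffOn (fun _ h => h)

lemma hat_contDiffOn (hr : 0 < r) : ContDiffOn ℝ 1 (S.hatX P) {φ | (S.LofX P) φ ∈ S.W} := by
  have : ContDiffOn ℝ 1 (fun φ k => evx P hr φ (-(S.d k ((S.LofX P) φ)))) {φ | (S.LofX P) φ ∈ S.W} := by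
    rw [contDiffOn_pi]
    intro k
    exact (evx_contDiff P hr).comp_contDiffOn (contDiffOn_id.prodMk ((S.d_comp P) k).neg)
  exact this.congr fun φ h => (S.hat_eq P) hr h

lemma U_open (hr : 0 < r) : IsOpen (S.UX P) :=
  ((S.hat_contDiffOn P) hr).continuousOn.isOpen_inter_preimage (S.open_pre P) S.Vopen

/-- The vector to which `Dg` is applied. -/
def inner0 (φ : X) : C(Icc0 r, Fin n → ℝ) →ₗ[ℝ] (Fin kk → Fin n → ℝ) where
  toFun χ := fun k => extFun χ (-(S.d k ((S.LofX P) φ))) -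
    (fderivWithin ℝ (S.d k) S.W ((S.LofX P) φ) (S.L χ)) • extFun (P.B φ) (-(S.d k ((S.LofX P) φ)))
  map_add' χ ψ := by
    funext k
    simp only [extFun_add, map_add, Pi.add_apply, add_smul]
    abel
  map_smul' c χ := by
    funext k
    simp only [extFun_smul, map_smul, Pi.smul_apply, smul_sub, smul_assoc, RingHom.id_apply]

/-- The extended derivative. -/
def De0 (φ : X) : C(Icc0 r, Fin n → ℝ) →ₗ[ℝ] (Fin n → ℝ) :=
  (fderivWithin ℝ S.g S.V ((S.hatX P) φ)).toLinearMap.comp ((S.inner0 P) φ)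

lemma hat_fderiv (hr : 0 < r) {φ : X} (h : (S.LofX P) φ ∈ S.W)
    (χ : X) : fderiv ℝ (S.hatX P) φ χ = (S.inner0 P) φ (P.A χ) := by
  have hd : ∀ k, HasFDerivAt (fun φ => S.d k ((S.LofX P) φ))
      ((fderivWithin ℝ (S.d k) S.W ((S.LofX P) φ)).comp (S.LofL P)) φ := by
    intro k
    have h1 := (((S.d_smooth k).differentiableOn one_ne_zero) _ h).hasFDerivWithinAt.hasFDerivAt
      (S.Wopen.mem_nhds h)
    exact h1.comp φ (S.LofL P).hasFDerivAt
  have hk : ∀ k, HasFDerivAt (fun φ => evx P hr φ (-(S.d k ((S.LofX P) φ))))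
      ((evD P hr (φ, -(S.d k ((S.LofX P) φ)))).comp
        ((ContinuousLinearMap.id ℝ _).prod
          (-((fderivWithin ℝ (S.d k) S.W ((S.LofX P) φ)).comp (S.LofL P))))) φ := by
    intro k
    exact (evx_hasFDerivAt P hr (φ, -(S.d k ((S.LofX P) φ)))).comp φ
      ((hasFDerivAt_id φ).prodMk (hd k).neg)
  have hh := hasFDerivAt_pi.2 hk
  have he : (S.hatX P) =ᶠ[nhds φ] (fun φ k => evx P hr φ (-(S.d k ((S.LofX P) φ)))) := by
    filter_upwards [(S.open_pre P).mem_nhds h] with ψ hψ using (S.hat_eq P) hr hψ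
  rw [(hh.congr_of_eventuallyEq he).fderiv]
  funext k
  have e1 := evx_eq P hr χ (S.neg_d_mem k h)
  have e2 := extFun_eq_prj hr (P.B φ) (S.neg_d_mem k h)
  simp only [ContinuousLinearMap.coe_pi', ContinuousLinearMap.comp_apply, evD, inner0,
    LinearMap.coe_mk, AddHom.coe_mk, e2, ContinuousLinearMap.add_apply,
    ContinuousLinearMap.prod_apply, ContinuousLinearMap.smulRight_apply, evT_apply,
    ContinuousLinearMap.coe_fst', ContinuousLinearMap.coe_snd', ContinuousLinearMap.id_apply,
    ContinuousLinearMap.neg_apply, e1, neg_smul, ← sub_eq_add_neg]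
  rfl

lemma fmap_fderiv (hr : 0 < r) {φ : X} (h : φ ∈ (S.UX P))
    (χ : X) : fderivWithin ℝ (S.fmapX P) (S.UX P) φ χ = (S.De0 P) φ (P.A χ) := by
  rw [fderivWithin_of_isOpen ((S.U_open P) hr) h]
  have h1 := ((S.g_smooth.differentiableOn one_ne_zero) _ h.2).hasFDerivWithinAt.hasFDerivAt
      (S.Vopen.mem_nhds h.2)
  have h2 := ((((S.hat_contDiffOn P) hr).differentiableOn one_ne_zero) _ h.1).differentiableAt
    ((S.open_pre P).mem_nhds h.1)
  have h3 := h1.comp φ h2.hasFDerivAt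
  have h4 : fderiv ℝ (S.fmapX P) φ = _ := h3.fderiv
  rw [h4, ContinuousLinearMap.comp_apply, (S.hat_fderiv P) hr h.1]
  rfl

lemma De0_formula (φ χ : X) (μ : Fin n) :
    (S.De0 P) φ (P.A χ) μ = S.dFormulaX P φ χ μ := by
  have hv : ∀ v : Fin kk → Fin n → ℝ, v = ∑ k, ∑ ν, v k ν • Pi.single k (Pi.single ν (1:ℝ)) := by
    intro v
    funext i j
    simp [Finset.sum_apply, Pi.single_apply, Finset.sum_ite_eq, apply_ite, ite_apply]
  show fderivWithin ℝ S.g S.V ((S.hatX P) φ) ((S.inner0 P) φ (P.A χ)) μ = _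
  rw [hv ((S.inner0 P) φ (P.A χ))]
  simp only [map_sum, map_smul, Finset.sum_apply, Pi.smul_apply, smul_eq_mul, dFormulaX]
  refine Finset.sum_congr rfl fun k _ => Finset.sum_congr rfl fun ν _ => ?_
  rw [mul_comm]
  congr 1
  simp only [inner0, LinearMap.coe_mk, AddHom.coe_mk, Pi.sub_apply, Pi.smul_apply, smul_eq_mul,
    LofX]
  ring

lemma De0_cont (hr : 0 < r) :
    ContinuousOn (fun p : (X) × C(Icc0 r, Fin n → ℝ) => (S.De0 P) p.1 p.2)
        ((S.UX P) ×ˢ Set.univ) := by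
  have hfst : ContinuousOn (fun p : (X) × C(Icc0 r, Fin n → ℝ) => p.1)
    ((S.UX P) ×ˢ Set.univ) := continuous_fst.continuousOn
  have hg : ContinuousOn (fun p : (X) × C(Icc0 r, Fin n → ℝ) =>
      fderivWithin ℝ S.g S.V ((S.hatX P) p.1)) ((S.UX P) ×ˢ Set.univ) := by
    apply (S.g_smooth.continuousOn_fderivWithin S.Vopen.uniqueDiffOn le_rfl).comp
    · exact ((S.hat_contDiffOn P) hr).continuousOn.comp hfst fun p hp => hp.1.1
    · exact fun p hp => hp.1.2
  refine hg.clm_apply ?_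
  rw [continuousOn_pi]
  intro k
  have hL : Continuous (fun p : (X) × C(Icc0 r, Fin n → ℝ) => (S.LofX P) p.1) :=
    (S.LofL P).continuous.comp continuous_fst
  have hD : ContinuousOn (fun p : (X) × C(Icc0 r, Fin n → ℝ) =>
      fderivWithin ℝ (S.d k) S.W ((S.LofX P) p.1) (S.L p.2)) ((S.UX P) ×ˢ Set.univ) := by
    refine ContinuousOn.clm_apply ?_ (S.L.continuous.comp continuous_snd).continuousOn
    exact ((S.d_smooth k).continuousOn_fderivWithin S.Wopen.uniqueDiffOn le_rfl).comp
      hL.continuousOn fun p hp => hp.1.1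
  have ht : ContinuousOn (fun p : (X) × C(Icc0 r, Fin n → ℝ) =>
      prj hr (-(S.d k ((S.LofX P) p.1)))) ((S.UX P) ×ˢ Set.univ) := by
    apply (prj_cont hr).comp_continuousOn
    exact (((S.d_comp P) k).continuousOn.comp hfst fun p hp => hp.1.1).neg
  have h1 : ContinuousOn (fun p : (X) × C(Icc0 r, Fin n → ℝ) =>
      p.2 (prj hr (-(S.d k ((S.LofX P) p.1))))) ((S.UX P) ×ˢ Set.univ) :=
    continuous_snd.continuousOn.eval ht
  have h2 : ContinuousOn (fun p : (X) × C(Icc0 r, Fin n → ℝ) =>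
      (P.B p.1) (prj hr (-(S.d k ((S.LofX P) p.1))))) ((S.UX P) ×ˢ Set.univ) := by
    have a : Continuous (fun p : (X) × C(Icc0 r, Fin n → ℝ) => (P.B p.1)) := by
      fun_prop
    exact a.continuousOn.eval ht
  refine (h1.sub (hD.smul h2)).congr ?_
  intro p hp
  have m := S.neg_d_mem k hp.1.1
  simp only [inner0, LinearMap.coe_mk, AddHom.coe_mk, extFun_eq_prj hr _ m]
  rfl

end Setting

/-- The concrete pair for `C¹`. -/
def c1Pair (r : ℝ) (n : ℕ) : APair (C1 r (Fin n → ℝ)) r (Fin n → ℝ) where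
  A := (ContinuousLinearMap.fst ℝ C(Icc0 r, Fin n → ℝ) C(Icc0 r, Fin n → ℝ)).comp
    (C1sub r (Fin n → ℝ)).subtypeL
  B := (ContinuousLinearMap.snd ℝ C(Icc0 r, Fin n → ℝ) C(Icc0 r, Fin n → ℝ)).comp
    (C1sub r (Fin n → ℝ)).subtypeL
  h := fun x => x.2


variable {r : ℝ} {n kk : ℕ} {F : Type*} [NormedAddCommGroup F] [NormedSpace ℝ F]
  [FiniteDimensional ℝ F]

/-- Proposition 2.1: `U` is open, `f` is continuously differentiable with property (e),
and the formula for `Df_μ(φ)χ` holds. -/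
theorem statement0 (hr : 0 < r) (S : Setting r n kk F) (hV : S.U.Nonempty) :
    IsOpen S.U ∧ ContDiffOn ℝ 1 S.fmap S.U ∧
    (∃ De : C1 r (Fin n → ℝ) → (C(Icc0 r, Fin n → ℝ) →ₗ[ℝ] (Fin n → ℝ)),
      (∀ φ ∈ S.U, ∀ χ : C1 r (Fin n → ℝ), De φ χ.1.1 = fderivWithin ℝ S.fmap S.U φ χ) ∧
      ContinuousOn (fun p : (C1 r (Fin n → ℝ)) × C(Icc0 r, Fin n → ℝ) => De p.1 p.2)
        (S.U ×ˢ Set.univ)) ∧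
    (∀ μ : Fin n, ∀ φ ∈ S.U, ∀ χ : C1 r (Fin n → ℝ),
      fderivWithin ℝ S.fmap S.U φ χ μ = S.dFormula φ χ μ) := by
  refine ⟨S.U_open (c1Pair r n) hr, ?_, ⟨S.De0 (c1Pair r n), ?_, S.De0_cont (c1Pair r n) hr⟩, ?_⟩
  · exact S.g_smooth.comp ((S.hat_contDiffOn (c1Pair r n) hr).mono fun φ h => h.1) fun φ h => h.2
  · exact fun φ h χ => (S.fmap_fderiv (c1Pair r n) hr h χ).symm
  · intro μ φ h χ
    exact (congrFun (S.fmap_fderiv (c1Pair r n) hr h χ) μ).trans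
      (S.De0_formula (c1Pair r n) φ χ μ)
end
end

section
/- For every φ∈X_{fK} there is an open neighbourhood N_φ of φ in X_f such that R^K defines a diffeomorphism from N_φ onto the set R^K N_φ, which is an open neighbourhood of R^Kφ in X_0. -/
set_option linter.unusedSectionVars false

open Set

noncomputable section

section helpers

open Filter Topology MeasureTheory

/-- The point `0` of `[-r,0]`. -/
def zpt {r : ℝ} (hr : 0 < r) : Icc0 r := ⟨0, by simp [Icc0, hr.le]⟩

lemma zmem {r : ℝ} (hr : 0 < r) : (0:ℝ) ∈ Icc0 r := (zpt hr).2

lemma neg_r_le {r : ℝ} (hr : 0 < r) : -r ≤ (0:ℝ) := by linarith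

/-- Constant extension of a continuous map on `[-r,0]`. -/
def cExt {r : ℝ} {n : ℕ} (hr : 0 < r) (q : C(Icc0 r, Fin n → ℝ)) (s : ℝ) : Fin n → ℝ :=
  q (Set.projIcc (-r) 0 (neg_r_le hr) s)

lemma cExt_joint {r : ℝ} {n : ℕ} (hr : 0 < r) :
    Continuous (fun x : C(Icc0 r, Fin n → ℝ) × ℝ => cExt hr x.1 x.2) := by
  have h : Continuous (fun x : C(Icc0 r, Fin n → ℝ) × ℝ =>
      (Set.projIcc (-r) 0 (neg_r_le hr) x.2 : Icc0 r)) :=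
    continuous_projIcc.comp continuous_snd
  exact continuous_fst.eval h

lemma cExt_cont {r : ℝ} {n : ℕ} (hr : 0 < r) (q : C(Icc0 r, Fin n → ℝ)) :
    Continuous (cExt hr q) :=
  q.continuous.comp continuous_projIcc

lemma cExt_eq {r : ℝ} {n : ℕ} (hr : 0 < r) (q : C(Icc0 r, Fin n → ℝ)) {t : ℝ}
    (ht : t ∈ Icc0 r) : cExt hr q t = extFun q t := by
  rw [cExt, extFun, dif_pos ht, Set.projIcc_of_mem _ ht]

lemma cExt_norm {r : ℝ} {n : ℕ} (hr : 0 < r) (q : C(Icc0 r, Fin n → ℝ)) (t : ℝ) :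
    ‖cExt hr q t‖ ≤ ‖q‖ := q.norm_coe_le_norm _

/-- The `C¹` extension of the function with value `p.1(0)` at `0` and derivative `p.2`. -/
def eeP {r : ℝ} {n : ℕ} (hr : 0 < r) (p : C(Icc0 r, Fin n → ℝ) × C(Icc0 r, Fin n → ℝ)) (t : ℝ) :
    Fin n → ℝ := p.1 (zpt hr) + ∫ s in (0:ℝ)..t, cExt hr p.2 s

lemma eeP_sub {r : ℝ} {n : ℕ} (hr : 0 < r) (p : C(Icc0 r, Fin n → ℝ) × C(Icc0 r, Fin n → ℝ))
    (t s : ℝ) : ‖eeP hr p t - eeP hr p s‖ ≤ ‖p‖ * |t - s| := by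
  have e : eeP hr p t - eeP hr p s = ∫ u in s..t, cExt hr p.2 u := by
    unfold eeP
    rw [add_sub_add_left_eq_sub, intervalIntegral.integral_interval_sub_left] <;>
      exact (cExt_cont hr _).intervalIntegrable _ _
  rw [e]
  refine intervalIntegral.norm_integral_le_of_norm_le_const fun x _ => ?_
  exact (cExt_norm hr _ _).trans (norm_snd_le p)

/-- `p ↦ eeP p t` as a continuous linear map. -/
def eeL {r : ℝ} {n : ℕ} (hr : 0 < r) (t : ℝ) :
    (C(Icc0 r, Fin n → ℝ) × C(Icc0 r, Fin n → ℝ)) →L[ℝ] (Fin n → ℝ) :=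
  LinearMap.mkContinuous
    { toFun := fun p => eeP hr p t
      map_add' := by
        intro p q
        have h : ∀ s, cExt hr (p + q).2 s = cExt hr p.2 s + cExt hr q.2 s := fun s => rfl
        simp only [eeP, h]
        rw [intervalIntegral.integral_add ((cExt_cont hr _).intervalIntegrable _ _)
          ((cExt_cont hr _).intervalIntegrable _ _)]
        simp only [Prod.fst_add, ContinuousMap.add_apply]
        abel
      map_smul' := by
        intro c p
        have h : ∀ s, cExt hr (c • p).2 s = c • cExt hr p.2 s := fun s => rfl
        simp only [eeP, h, intervalIntegral.integral_smul]
        simp [smul_add] }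
    (1 + |t|) (by
      intro p
      have h1 : ‖eeP hr p 0‖ ≤ ‖p‖ := by
        simp only [eeP, intervalIntegral.integral_same, add_zero]
        exact (p.1.norm_coe_le_norm _).trans (norm_fst_le p)
      have h2 := eeP_sub hr p t 0
      have h3 : ‖eeP hr p t‖ ≤ ‖eeP hr p t - eeP hr p 0‖ + ‖eeP hr p 0‖ := by
        simpa using norm_add_le (eeP hr p t - eeP hr p 0) (eeP hr p 0)
      rw [sub_zero] at h2
      show ‖eeP hr p t‖ ≤ _
      linarith)

lemma eeL_apply {r : ℝ} {n : ℕ} (hr : 0 < r) (t : ℝ)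
    (p : C(Icc0 r, Fin n → ℝ) × C(Icc0 r, Fin n → ℝ)) : eeL hr t p = eeP hr p t := rfl

lemma eeL_cont {r : ℝ} {n : ℕ} (hr : 0 < r) : Continuous (eeL (n := n) hr) := by
  have : LipschitzWith 1 (eeL (n := n) hr) := by
    refine LipschitzWith.of_dist_le_mul fun t s => ?_
    rw [dist_eq_norm, dist_eq_norm, NNReal.coe_one, one_mul]
    refine ContinuousLinearMap.opNorm_le_bound _ (norm_nonneg _) fun p => ?_
    have := eeP_sub hr p t s
    rw [mul_comm]
    exact this
  exact this.continuous

lemma eeP_deriv {r : ℝ} {n : ℕ} (hr : 0 < r)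
    (p : C(Icc0 r, Fin n → ℝ) × C(Icc0 r, Fin n → ℝ)) (t : ℝ) :
    HasDerivAt (eeP hr p) (cExt hr p.2 t) t := by
  have h := intervalIntegral.integral_hasDerivAt_right
    ((cExt_cont hr p.2).intervalIntegrable (μ := volume) 0 t)
    ((cExt_cont hr p.2).stronglyMeasurableAtFilter _ _) (cExt_cont hr p.2).continuousAt
  exact h.const_add _

lemma eeP_contDiff {r : ℝ} {n : ℕ} (hr : 0 < r) :
    ContDiff ℝ 1 (fun x : (C(Icc0 r, Fin n → ℝ) × C(Icc0 r, Fin n → ℝ)) × ℝ =>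
      eeP hr x.1 x.2) := by
  rw [contDiff_one_iff_hasFDerivAt]
  have c2 : Continuous (fun x : (C(Icc0 r, Fin n → ℝ) × C(Icc0 r, Fin n → ℝ)) × ℝ =>
      ContinuousLinearMap.toSpanSingleton ℝ (cExt hr x.1.2 x.2)) := by
    have h : Continuous (fun x : (C(Icc0 r, Fin n → ℝ) × C(Icc0 r, Fin n → ℝ)) × ℝ =>
      cExt hr x.1.2 x.2) :=
      (cExt_joint hr).comp ((continuous_snd.comp continuous_fst).prodMk continuous_snd)
    exact (ContinuousLinearMap.toSpanSingletonCLE (𝕜 := ℝ) (E := Fin n → ℝ)).continuous.comp h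
  have c1 : Continuous (fun x : (C(Icc0 r, Fin n → ℝ) × C(Icc0 r, Fin n → ℝ)) × ℝ =>
      eeL (n := n) hr x.2) := (eeL_cont hr).comp continuous_snd
  refine ⟨fun x => (eeL hr x.2).coprod
    (ContinuousLinearMap.toSpanSingleton ℝ (cExt hr x.1.2 x.2)), ?_, fun x => ?_⟩
  · have h1 := c1.clm_comp (continuous_const (y := ContinuousLinearMap.fst ℝ
      (C(Icc0 r, Fin n → ℝ) × C(Icc0 r, Fin n → ℝ)) ℝ))
    have h2 := c2.clm_comp (continuous_const (y := ContinuousLinearMap.snd ℝ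
      (C(Icc0 r, Fin n → ℝ) × C(Icc0 r, Fin n → ℝ)) ℝ))
    refine (h1.add h2).congr fun x => ?_
    refine ContinuousLinearMap.ext fun y => ?_
    simp
  · exact (hasStrictFDerivAt_uncurry_coprod (𝕜 := ℝ) (u := x)
      (f := fun p t => eeP hr p t) (f₁ := fun _ t => eeL hr t)
      (f₂ := fun p t => ContinuousLinearMap.toSpanSingleton ℝ (cExt hr p.2 t))
      (Eventually.of_forall fun v => (eeL hr v.2).hasFDerivAt)
      (Eventually.of_forall fun v => (eeP_deriv hr v.1 v.2).hasFDerivAt)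
      c1.continuousAt c2.continuousAt).hasFDerivAt

lemma mem_C1sub_iff {r : ℝ} {n : ℕ} (hr : 0 < r)
    (p : C(Icc0 r, Fin n → ℝ) × C(Icc0 r, Fin n → ℝ)) :
    p ∈ C1sub r (Fin n → ℝ) ↔ ∀ t : Icc0 r, p.1 t = eeL hr t p := by
  constructor
  · intro hp t
    have hp' : ∀ t ∈ Icc0 r, HasDerivWithinAt (extFun p.1) (extFun p.2 t) (Icc0 r) t := hp
    have h0 : (0:ℝ) ∈ Icc0 r := (zpt hr).2
    have hsub : uIcc 0 (t:ℝ) ⊆ Icc0 r := by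
      rw [uIcc_of_ge t.2.2]; exact Icc_subset_Icc t.2.1 le_rfl
    have key := intervalIntegral.integral_eq_sub_of_hasDeriv_right (a := 0) (b := (t:ℝ))
      (f := extFun p.1) (f' := cExt hr p.2)
      (fun s hs => ((hp' s (hsub hs)).continuousWithinAt).mono hsub)
      (by
        intro s hs
        rw [min_eq_right t.2.2, max_eq_left t.2.2] at hs
        have hs' : s ∈ Icc0 r := ⟨t.2.1.trans hs.1.le, hs.2.le⟩
        rw [cExt_eq hr _ hs']
        have hn : Icc0 r ∈ 𝓝 s := Icc_mem_nhds (t.2.1.trans_lt hs.1) hs.2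
        exact ((hp' s hs').hasDerivAt hn).hasDerivWithinAt)
      ((cExt_cont hr _).intervalIntegrable _ _)
    rw [eeL_apply, eeP, key]
    have e1 : extFun p.1 t = p.1 t := by rw [extFun, dif_pos t.2]
    have e2 : extFun p.1 0 = p.1 (zpt hr) := by rw [extFun, dif_pos h0]; rfl
    rw [e1, e2]; abel
  · intro h t ht
    rw [← cExt_eq hr _ ht]
    refine (eeP_deriv hr p t).hasDerivWithinAt.congr_of_mem (fun s hs => ?_) ht
    rw [extFun, dif_pos hs, h ⟨s, hs⟩, eeL_apply]

lemma C1_complete {r : ℝ} {n : ℕ} (hr : 0 < r) : CompleteSpace (C1 r (Fin n → ℝ)) := by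
  have hc : IsClosed (C1sub r (Fin n → ℝ) :
      Set (C(Icc0 r, Fin n → ℝ) × C(Icc0 r, Fin n → ℝ))) := by
    have e : (C1sub r (Fin n → ℝ) : Set (C(Icc0 r, Fin n → ℝ) × C(Icc0 r, Fin n → ℝ))) =
        ⋂ t : Icc0 r, {p | p.1 t = eeL hr t p} := by
      ext p; simp only [SetLike.mem_coe, mem_C1sub_iff hr, mem_iInter, mem_setOf_eq]
    rw [e]
    refine isClosed_iInter fun t => isClosed_eq ?_ (eeL hr t).continuous
    exact (continuous_eval_const t).comp continuous_fst
  exact hc.completeSpace_coe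

lemma evC_eq {r : ℝ} {n : ℕ} (hr : 0 < r) (φ : C1 r (Fin n → ℝ)) {t : ℝ} (ht : t ∈ Icc0 r) :
    evC φ t = eeP hr φ.1 t := by
  rw [evC, extFun, dif_pos ht, (mem_C1sub_iff hr φ.1).1 φ.2 ⟨t, ht⟩, eeL_apply]

/-- Evaluation of the derivative at zero. -/
def dv0 {r : ℝ} {n : ℕ} (hr : 0 < r) : C1 r (Fin n → ℝ) →L[ℝ] (Fin n → ℝ) :=
  (ContinuousMap.evalCLM ℝ (zpt hr)).comp
    ((ContinuousLinearMap.snd ℝ _ _).comp (C1sub r (Fin n → ℝ)).subtypeL)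

lemma dv0_apply {r : ℝ} {n : ℕ} (hr : 0 < r) (φ : C1 r (Fin n → ℝ)) : dv0 hr φ = dvC φ 0 := by
  rw [dvC, extFun, dif_pos (zmem hr)]; rfl

/-- `Y` as a continuous linear map. -/
def YL {r : ℝ} {n : ℕ} (ψ : Fin n → C1 r ℝ) : (Fin n → ℝ) →L[ℝ] C1 r (Fin n → ℝ) :=
  (Ymap ψ).toContinuousLinearMap

lemma YL_apply {r : ℝ} {n : ℕ} (ψ : Fin n → C1 r ℝ) (x) : YL ψ x = Ymap ψ x := rfl

lemma sCLM_apply' {n : ℕ} (ν : Fin n) (x : ℝ) : sCLM n ν x = Pi.single ν x := by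
  ext j
  by_cases h : j = ν
  · subst h; simp [sCLM]
  · simp [sCLM, h]

lemma dv0_Y {r : ℝ} {n : ℕ} (hr : 0 < r) (ψ : Fin n → C1 r ℝ)
    (hψ1 : ∀ ν, dvC (ψ ν) 0 = 1) (x : Fin n → ℝ) : dv0 hr (Ymap ψ x) = x := by
  have h : ∀ ν, dv0 hr (singleC1 ν (ψ ν)) = Pi.single ν 1 := by
    intro ν
    rw [dv0_apply, dvC]
    show extFun (CMsingle ν (ψ ν).1.2) 0 = _
    rw [extFun_CMsingle, ← sCLM_apply']
    congr 1
    exact hψ1 ν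
  show dv0 hr (∑ ν, x ν • singleC1 ν (ψ ν)) = x
  rw [map_sum]
  simp only [map_smul, h]
  exact (pi_eq_sum_univ' x).symm ▸ by
    ext j; simp [Finset.sum_apply, Pi.single_apply]

lemma evC_add_smul {r : ℝ} {n : ℕ} (φ χ : C1 r (Fin n → ℝ)) (s t : ℝ) :
    evC (φ + s • χ) t = evC φ t + s • evC χ t := by
  simp [evC, extFun_add, extFun_smul]

lemma ev_Y {r : ℝ} {n : ℕ} (hr : 0 < r) (ψ : Fin n → C1 r ℝ)
    (hψ0 : ∀ ν, evC (ψ ν) 0 = 0) (x : Fin n → ℝ) : evC (Ymap ψ x) 0 = 0 := by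
  have h : ∀ ν, eeL hr 0 (singleC1 ν (ψ ν)).1 = 0 := by
    intro ν
    rw [eeL_apply, ← evC_eq hr _ (zmem hr), evC]
    show extFun (CMsingle ν (ψ ν).1.1) 0 = _
    rw [extFun_CMsingle, show extFun (ψ ν).1.1 0 = 0 from hψ0 ν, map_zero]
  rw [evC_eq hr _ (zmem hr), ← eeL_apply]
  show ((eeL hr 0).comp (C1sub r (Fin n → ℝ)).subtypeL) (∑ ν, x ν • singleC1 ν (ψ ν)) = 0
  rw [map_sum]
  refine Finset.sum_eq_zero fun ν _ => ?_
  rw [map_smul]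
  show x ν • eeL hr 0 (singleC1 ν (ψ ν)).1 = 0
  rw [h, smul_zero]

/-- `L` on `C¹` as a continuous linear map. -/
def LL {r : ℝ} {n kk : ℕ} {F : Type*} [NormedAddCommGroup F] [NormedSpace ℝ F]
    (S : Setting r n kk F) : C1 r (Fin n → ℝ) →L[ℝ] F :=
  S.L.comp ((ContinuousLinearMap.fst ℝ _ _).comp (C1sub r (Fin n → ℝ)).subtypeL)

lemma LL_apply {r : ℝ} {n kk : ℕ} {F : Type*} [NormedAddCommGroup F] [NormedSpace ℝ F]
    (S : Setting r n kk F) (φ : C1 r (Fin n → ℝ)) : LL S φ = S.Lof φ := rfl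

lemma LL_Y {r : ℝ} {n kk : ℕ} {F : Type*} [NormedAddCommGroup F] [NormedSpace ℝ F]
    (S : Setting r n kk F) (ψ : Fin n → C1 r ℝ)
    (hψL : ∀ ν, S.L (singleC1 ν (ψ ν)).1.1 = 0) (x : Fin n → ℝ) : LL S (Ymap ψ x) = 0 := by
  show LL S (∑ ν, x ν • singleC1 ν (ψ ν)) = 0
  rw [map_sum]
  refine Finset.sum_eq_zero fun ν _ => ?_
  rw [map_smul]
  show x ν • S.L (singleC1 ν (ψ ν)).1.1 = 0
  rw [hψL, smul_zero]

lemma hat_contDiffAt {r : ℝ} {n kk : ℕ} {F : Type*} [NormedAddCommGroup F] [NormedSpace ℝ F]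
    (hr : 0 < r) (S : Setting r n kk F) (φ : C1 r (Fin n → ℝ)) (hφ : S.Lof φ ∈ S.W) :
    ContDiffAt ℝ 1 S.hat φ := by
  have hW : ∀ᶠ χ in 𝓝 φ, S.Lof χ ∈ S.W :=
    (LL S).continuous.continuousAt.eventually (S.Wopen.mem_nhds hφ)
  rw [contDiffAt_pi]
  intro k
  have hd : ContDiffAt ℝ 1 (fun χ => S.d k (LL S χ)) φ :=
    ContDiffAt.comp φ ((S.d_smooth k).contDiffAt (S.Wopen.mem_nhds hφ))
      (ContinuousLinearMap.contDiff (𝕜 := ℝ) (E := C1 r (Fin n → ℝ)) (F := F) (LL S)).contDiffAt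
  have hs : ContDiffAt ℝ 1 (fun χ : C1 r (Fin n → ℝ) => (C1sub r (Fin n → ℝ)).subtypeL χ) φ :=
    (ContinuousLinearMap.contDiff (𝕜 := ℝ) (E := C1 r (Fin n → ℝ))
      (F := C(Icc0 r, Fin n → ℝ) × C(Icc0 r, Fin n → ℝ))
      (C1sub r (Fin n → ℝ)).subtypeL).contDiffAt
  have h : ContDiffAt ℝ 1 (fun χ : C1 r (Fin n → ℝ) =>
      eeP hr ((C1sub r (Fin n → ℝ)).subtypeL χ) (-(S.d k (LL S χ)))) φ :=
    ContDiffAt.comp (f := fun χ : C1 r (Fin n → ℝ) =>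
      ((C1sub r (Fin n → ℝ)).subtypeL χ, -(S.d k (LL S χ)))) φ (eeP_contDiff hr).contDiffAt
      (hs.prodMk hd.neg)
  refine h.congr_of_eventuallyEq ?_
  filter_upwards [hW] with χ hχ
  have := S.d_mem k _ hχ
  exact evC_eq hr χ ⟨by linarith [this.2], by linarith [this.1]⟩

lemma U_nhds {r : ℝ} {n kk : ℕ} {F : Type*} [NormedAddCommGroup F] [NormedSpace ℝ F]
    (hr : 0 < r) (S : Setting r n kk F) : IsOpen S.U := by
  rw [isOpen_iff_mem_nhds]
  intro φ hφ
  have hW : ∀ᶠ χ in 𝓝 φ, S.Lof χ ∈ S.W :=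
    (LL S).continuous.continuousAt.eventually (S.Wopen.mem_nhds hφ.1)
  have hV := (hat_contDiffAt hr S φ hφ.1).continuousAt.eventually (S.Vopen.mem_nhds hφ.2)
  filter_upwards [hW, hV] with χ h1 h2 using ⟨h1, h2⟩

lemma f_contDiffAt {r : ℝ} {n kk : ℕ} {F : Type*} [NormedAddCommGroup F] [NormedSpace ℝ F]
    (hr : 0 < r) (S : Setting r n kk F) (φ : C1 r (Fin n → ℝ)) (hφ : φ ∈ S.U) :
    ContDiffAt ℝ 1 S.fmap φ :=
  ContDiffAt.comp φ (S.g_smooth.contDiffAt (S.Vopen.mem_nhds hφ.2)) (hat_contDiffAt hr S φ hφ.1)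

lemma Df_Y {r : ℝ} {n kk : ℕ} {F : Type*} [NormedAddCommGroup F] [NormedSpace ℝ F]
    (hr : 0 < r) (S : Setting r n kk F) (ψ : Fin n → C1 r ℝ)
    (hψL : ∀ ν, S.L (singleC1 ν (ψ ν)).1.1 = 0)
    (hψ0 : ∀ ν, evC (ψ ν) 0 = 0) (φ : C1 r (Fin n → ℝ)) (hφ : φ ∈ S.UJ Finset.univ)
    (x : Fin n → ℝ) : fderiv ℝ S.fmap φ (Ymap ψ x) = 0 := by
  have hconst : ∀ s : ℝ, S.fmap (φ + s • Ymap ψ x) = S.fmap φ := by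
    intro s
    have hL : S.Lof (φ + s • Ymap ψ x) = S.Lof φ := by
      rw [← LL_apply, ← LL_apply, map_add, map_smul, LL_Y S ψ hψL, smul_zero, add_zero]
    unfold Setting.fmap
    congr 1
    funext k
    unfold Setting.hat
    rw [hL, hφ.2.2.1 k (Finset.mem_univ k), neg_zero, evC_add_smul, ev_Y hr ψ hψ0, smul_zero,
      add_zero]
  have hd := ((f_contDiffAt hr S φ hφ.1).differentiableAt one_ne_zero).lineDeriv_eq_fderiv
    (v := Ymap ψ x)
  rw [← hd, lineDeriv]
  simp only [hconst, deriv_const]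

lemma generic_main {E G : Type*} [NormedAddCommGroup E] [NormedSpace ℝ E] [CompleteSpace E]
    [NormedAddCommGroup G] [NormedSpace ℝ G] (f : E → G) (Y : G →L[ℝ] E) (δ : E →L[ℝ] G)
    (U : Set E) (hUo : IsOpen U) (φ : E) (hU : φ ∈ U) (hφδ : δ φ = f φ)
    (hf : ContDiffAt ℝ 1 f φ) (hDY : ∀ x, fderiv ℝ f φ (Y x) = 0) (hδY : ∀ x, δ (Y x) = x)
    (X X0 : Set E) (hX : ∀ χ, χ ∈ X ↔ χ ∈ U ∧ δ χ = f χ) (hX0' : ∀ χ, χ ∈ X0 ↔ δ χ = 0)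
    (R : E → E) (hR : ∀ χ, R χ = χ - Y (δ χ)) :
    ∃ N O : Set E, IsOpen O ∧ N = X ∩ O ∧ φ ∈ N ∧
        (∃ O', IsOpen O' ∧ R '' N = X0 ∩ O') ∧ IsC1DiffeoOn R N (R '' N) := by
  set D := fderiv ℝ f φ with hD
  let Φ : E → E := fun χ => χ - Y (f χ)
  have hΦ : ContDiffAt ℝ 1 Φ φ :=
    contDiffAt_id.sub (ContDiffAt.comp φ Y.contDiff.contDiffAt hf)
  let A : E ≃L[ℝ] E :=
    ContinuousLinearEquiv.equivOfInverse
      (ContinuousLinearMap.id ℝ _ - Y.comp D) (ContinuousLinearMap.id ℝ _ + Y.comp D)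
      (fun χ => by simp [hDY]) (fun χ => by simp [hDY])
  have hΦ' : HasFDerivAt Φ (A : E →L[ℝ] E) φ := by
    have h := (hf.differentiableAt one_ne_zero).hasFDerivAt
    exact (hasFDerivAt_id φ).sub (Y.hasFDerivAt.comp φ h)
  let P := hΦ.toOpenPartialHomeomorph Φ hΦ' one_ne_zero
  have hPs : φ ∈ P.source := hΦ.mem_toOpenPartialHomeomorph_source hΦ' one_ne_zero
  have hPc : ∀ χ, P χ = χ - Y (f χ) := fun χ => rfl
  have hinv : ContDiffAt ℝ 1 P.symm (P φ) := hΦ.to_localInverse hΦ' one_ne_zero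
  clear_value P
  obtain ⟨T, hTsub, hTo, hTφ⟩ := eventually_nhds_iff.1 (hinv.eventually (by simp))
  have hXR : ∀ χ ∈ X, P χ = R χ := by
    intro χ hχ
    rw [hPc, hR, ((hX χ).1 hχ).2]
  have hX0 : ∀ χ, P χ ∈ X0 ↔ δ χ = f χ := by
    intro χ
    rw [hX0', hPc, map_sub, hδY, sub_eq_zero]
  have hO1 : IsOpen (P.source ∩ P ⁻¹' T) := P.isOpen_inter_preimage hTo
  have hO : IsOpen ((P.source ∩ P ⁻¹' T) ∩ U) := hO1.inter hUo
  have hOs : (P.source ∩ P ⁻¹' T) ∩ U ⊆ P.source := fun χ h => h.1.1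
  generalize hOdef : (P.source ∩ P ⁻¹' T) ∩ U = O at hO hOs
  have hOT : ∀ χ ∈ O, P χ ∈ T := by subst hOdef; exact fun χ h => h.1.2
  have hOU : ∀ χ ∈ O, χ ∈ U := by subst hOdef; exact fun χ h => h.2
  have hOφ : φ ∈ O := by subst hOdef; exact ⟨⟨hPs, hTφ⟩, hU⟩
  have himg : R '' (X ∩ O) = P '' (X ∩ O) :=
    (Set.image_congr fun χ h => hXR χ h.1).symm
  have hleft : ∀ χ ∈ X ∩ O, P.symm (R χ) = χ := by
    intro χ h
    rw [← hXR χ h.1, P.left_inv (hOs h.2)]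
  refine ⟨X ∩ O, O, hO, rfl, ⟨(hX φ).2 ⟨hU, hφδ⟩, hOφ⟩,
    ⟨P '' O, P.isOpen_image_of_subset_source hO hOs, ?_⟩,
    ?_, ?_, rfl, P.symm, ?_, ?_, ?_⟩
  · rw [himg]
    ext y
    constructor
    · rintro ⟨χ, h, rfl⟩
      exact ⟨(hX0 χ).2 ((hX χ).1 h.1).2, χ, h.2, rfl⟩
    · rintro ⟨h0, χ, h, rfl⟩
      exact ⟨χ, ⟨(hX χ).2 ⟨hOU χ h, (hX0 χ).1 h0⟩, h⟩, rfl⟩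
  · have e : R = fun χ => χ - Y (δ χ) := funext hR
    rw [e]
    exact (contDiff_id.sub (Y.contDiff.comp δ.contDiff)).contDiffOn
  · exact fun a ha b hb hab => by rw [← hleft a ha, hab, hleft b hb]
  · rw [himg]
    rintro _ ⟨χ, h, rfl⟩
    exact (hTsub _ (hOT χ h.2)).contDiffWithinAt
  · exact hleft
  · rintro _ ⟨χ, h, rfl⟩
    rw [hleft χ h]

end helpers

variable {r : ℝ} {n kk : ℕ} {F : Type*} [NormedAddCommGroup F] [NormedSpace ℝ F]
  [FiniteDimensional ℝ F]

/-- Corollary 3.3: every `φ ∈ X_{fK}` has an open neighbourhood `N_φ` in `X_f` on which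
`R^K` restricts to a diffeomorphism onto an open neighbourhood of `R^Kφ` in `X₀`. -/
theorem statement5 (hr : 0 < r) (S : Setting r n kk F)
    (hUK : (S.UJ (Finset.univ : Finset (Fin kk))).Nonempty)
    (z : ℝ) (hz : z ∈ Set.Ioo (-r) 0) (ψ : Fin n → C1 r ℝ)
    (hψL : ∀ ν, S.L (singleC1 ν (ψ ν)).1.1 = 0)
    (hψ0 : ∀ ν, evC (ψ ν) 0 = 0)
    (hψ1 : ∀ ν, dvC (ψ ν) 0 = 1)
    (hψz : ∀ ν, ∀ t ∈ Set.Icc (-r) z, evC (ψ ν) t = 0) :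
    ∀ φ ∈ S.XfJ (Finset.univ : Finset (Fin kk)),
      ∃ N O : Set (C1 r (Fin n → ℝ)), IsOpen O ∧ N = S.Xf ∩ O ∧ φ ∈ N ∧
        (∃ O', IsOpen O' ∧ RKmap ψ '' N = (X0sub r n : Set (C1 r (Fin n → ℝ))) ∩ O') ∧
        IsC1DiffeoOn (RKmap ψ) N (RKmap ψ '' N) := by
  intro φ hφ
  have := C1_complete (n := n) hr
  exact generic_main (E := C1 r (Fin n → ℝ)) (G := Fin n → ℝ) S.fmap (YL ψ) (dv0 hr) S.U
    (U_nhds hr S) φ hφ.1.1 ((dv0_apply hr φ).trans hφ.1.2) (f_contDiffAt hr S φ hφ.1.1)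
    (fun x => Df_Y hr S ψ hψL hψ0 φ hφ.2 x) (fun x => dv0_Y hr ψ hψ1 x) S.Xf _
    (fun χ => by rw [dv0_apply]; rfl) (fun χ => by rw [dv0_apply]; rfl) (RKmap ψ)
    (fun χ => by rw [dv0_apply]; rfl)
end
end

section
/- Suppose U_K≠∅ and one of the hypotheses (b), (d1b), (K) is satisfied. Then there exists an open neighbourhood N_K of X_{fK} in X_f such that the projection R^K defines a diffeomorphism R_K from N_K onto the open subset R^K N_K of X_0, and N_K is a graph over X_0 (with respect to the closed complement Q_K of X_0). -/
set_option linter.unusedSectionVars false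

open Set

noncomputable section

section helpers1

open Topology Filter

/-- Abstract evaluation structure on a normed space of `C¹` functions on `[-r,0]`. -/
structure EvSys (r : ℝ) (X E : Type*) [NormedAddCommGroup X] [NormedSpace ℝ X]
    [NormedAddCommGroup E] [NormedSpace ℝ E] where
  e : X → ℝ → E
  e' : X → ℝ → E
  e_add : ∀ φ χ t, e (φ + χ) t = e φ t + e χ t
  e_smul : ∀ (c : ℝ) φ t, e (c • φ) t = c • e φ t
  e'_add : ∀ φ χ t, e' (φ + χ) t = e' φ t + e' χ t
  e'_smul : ∀ (c : ℝ) φ t, e' (c • φ) t = c • e' φ t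
  e_le : ∀ φ t, ‖e φ t‖ ≤ ‖φ‖
  e'_le : ∀ φ t, ‖e' φ t‖ ≤ ‖φ‖
  deriv : ∀ φ, ∀ t ∈ Set.Icc (-r) 0, HasDerivWithinAt (e φ) (e' φ t) (Set.Icc (-r) 0) t
  cont : ∀ φ, ContinuousOn (e' φ) (Set.Icc (-r) 0)

namespace EvSys

variable {r : ℝ} {X E : Type*} [NormedAddCommGroup X] [NormedSpace ℝ X]
    [NormedAddCommGroup E] [NormedSpace ℝ E] (A : EvSys r X E)

/-- evaluation as a continuous linear map -/
def ev (t : ℝ) : X →L[ℝ] E :=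
  LinearMap.mkContinuous
    { toFun := fun φ => A.e φ t
      map_add' := fun φ ψ => A.e_add φ ψ t
      map_smul' := fun c φ => A.e_smul c φ t } 1
    (fun φ => by rw [one_mul]; exact A.e_le φ t)

/-- evaluation of the derivative as a continuous linear map -/
def dv (t : ℝ) : X →L[ℝ] E :=
  LinearMap.mkContinuous
    { toFun := fun φ => A.e' φ t
      map_add' := fun φ ψ => A.e'_add φ ψ t
      map_smul' := fun c φ => A.e'_smul c φ t } 1
    (fun φ => by rw [one_mul]; exact A.e'_le φ t)

lemma ev_apply (t : ℝ) (φ : X) : A.ev t φ = A.e φ t := rfl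
lemma dv_apply (t : ℝ) (φ : X) : A.dv t φ = A.e' φ t := rfl

lemma e_sub (φ χ : X) (t : ℝ) : A.e (φ - χ) t = A.e φ t - A.e χ t := map_sub (A.ev t) _ _
lemma e'_sub (φ χ : X) (t : ℝ) : A.e' (φ - χ) t = A.e' φ t - A.e' χ t := map_sub (A.dv t) _ _

lemma lip (χ : X) {t s : ℝ} (ht : t ∈ Set.Icc (-r) 0) (hs : s ∈ Set.Icc (-r) 0) :
    ‖A.e χ s - A.e χ t‖ ≤ ‖χ‖ * ‖s - t‖ :=
  (convex_Icc (-r) 0).norm_image_sub_le_of_norm_hasDerivWithin_le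
    (f := A.e χ) (f' := A.e' χ) (fun x hx => A.deriv χ x hx) (fun x _ => A.e'_le χ x) ht hs

lemma continuousOn_dv :
    ContinuousOn (fun p : X × ℝ => A.e' p.1 p.2) (univ ×ˢ Set.Icc (-r) 0) := by
  rintro ⟨φ, t⟩ ⟨-, ht⟩
  have h1 : Tendsto (fun p : X × ℝ => A.e' φ p.2) (𝓝[univ ×ˢ Set.Icc (-r) 0] (φ, t))
      (𝓝 (A.e' φ t)) := by
    have := A.cont φ t ht
    refine Tendsto.comp this ?_
    exact (continuousWithinAt_snd (s := univ ×ˢ Set.Icc (-r) 0) (p := (φ, t))).tendsto_nhdsWithin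
      (fun p hp => hp.2)
  have h2 : Tendsto (fun p : X × ℝ => A.e' (p.1 - φ) p.2) (𝓝[univ ×ˢ Set.Icc (-r) 0] (φ, t))
      (𝓝 0) := by
    have h3 : Tendsto (fun p : X × ℝ => ‖p.1 - φ‖) (𝓝[univ ×ˢ Set.Icc (-r) 0] (φ, t)) (𝓝 0) := by
      have : Continuous (fun p : X × ℝ => ‖p.1 - φ‖) := by fun_prop
      have h := (this.tendsto (φ, t)).mono_left
        (nhdsWithin_le_nhds (s := univ ×ˢ Set.Icc (-r) 0))
      simpa using h
    exact squeeze_zero_norm (fun p => A.e'_le _ _) h3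
  have h4 := h1.add h2
  rw [add_zero] at h4
  refine h4.congr (fun p => ?_)
  rw [A.e'_sub]; abel

lemma continuousOn_ev : ContinuousOn A.ev (Set.Icc (-r) 0) := by
  have : LipschitzOnWith 1 A.ev (Set.Icc (-r) 0) := by
    refine LipschitzOnWith.of_dist_le_mul fun s hs t ht => ?_
    rw [dist_eq_norm, dist_eq_norm]
    refine ContinuousLinearMap.opNorm_le_bound _ (by positivity) fun χ => ?_
    have := A.lip χ ht hs
    rw [NNReal.coe_one, one_mul, mul_comm]
    exact this
  exact this.continuousOn

lemma hasFDerivWithinAt_ev (φ : X) {t : ℝ} (ht : t ∈ Set.Icc (-r) 0) :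
    HasFDerivWithinAt (fun p : X × ℝ => A.e p.1 p.2)
      ((A.ev t).comp (ContinuousLinearMap.fst ℝ (X) ℝ) +
        (ContinuousLinearMap.snd ℝ (X) ℝ).smulRight (A.e' φ t))
      (univ ×ˢ Set.Icc (-r) 0) (φ, t) := by
  have hA : HasFDerivWithinAt (fun p : X × ℝ => A.ev t p.1)
      ((A.ev t).comp (ContinuousLinearMap.fst ℝ (X) ℝ)) (univ ×ˢ Set.Icc (-r) 0) (φ, t) :=
    ((A.ev t).comp (ContinuousLinearMap.fst ℝ (X) ℝ)).hasFDerivWithinAt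
  have hB : HasFDerivWithinAt (fun p : X × ℝ => A.e φ p.2)
      ((ContinuousLinearMap.snd ℝ (X) ℝ).smulRight (A.e' φ t))
      (univ ×ˢ Set.Icc (-r) 0) (φ, t) := by
    have h1 : HasFDerivWithinAt (A.e φ) (ContinuousLinearMap.toSpanSingleton ℝ (A.e' φ t))
      (Set.Icc (-r) 0) t := (A.deriv φ t ht).hasFDerivWithinAt
    have h2 : HasFDerivWithinAt (fun p : X × ℝ => p.2)
      (ContinuousLinearMap.snd ℝ (X) ℝ) (univ ×ˢ Set.Icc (-r) 0) (φ, t) :=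
      (ContinuousLinearMap.snd ℝ (X) ℝ).hasFDerivWithinAt
    have h3 := HasFDerivWithinAt.comp (g := A.e φ) (t := Set.Icc (-r) 0) (φ, t) h1 h2
      (fun p hp => hp.2)
    refine h3.congr_fderiv ?_
    ext x <;> simp
  have hC : HasFDerivWithinAt
      (fun p : X × ℝ => A.e (p.1 - φ) p.2 - A.e (p.1 - φ) t)
      (0 : X × ℝ →L[ℝ] E) (univ ×ˢ Set.Icc (-r) 0) (φ, t) := by
    rw [hasFDerivWithinAt_iff_isLittleO]
    rw [Asymptotics.isLittleO_iff]
    intro c hc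
    have : ∀ᶠ p : X × ℝ in 𝓝[univ ×ˢ Set.Icc (-r) 0] (φ, t), ‖p - (φ, t)‖ < c := by
      apply mem_nhdsWithin_of_mem_nhds
      have := Metric.ball_mem_nhds ((φ, t) : X × ℝ) hc
      filter_upwards [this] with p hp
      rwa [Metric.mem_ball, dist_eq_norm] at hp
    filter_upwards [this, self_mem_nhdsWithin] with p hp hmem
    have h1 := A.lip (p.1 - φ) ht hmem.2
    have h2 : ‖p.1 - φ‖ ≤ ‖p - (φ, t)‖ := norm_fst_le (p - (φ, t))
    have h3 : ‖p.2 - t‖ ≤ ‖p - (φ, t)‖ := norm_snd_le (p - (φ, t))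
    have h4 : A.e (φ - φ) t - A.e (φ - φ) t = 0 := sub_self _
    simp only [sub_self, ContinuousLinearMap.zero_apply, sub_zero]
    calc _ ≤ _ := h1
      _ ≤ c * ‖p - (φ, t)‖ := by
        apply mul_le_mul (h2.trans hp.le) h3 (norm_nonneg _) hc.le
  have := ((hA.add hB).add hC).sub (hasFDerivWithinAt_const (A.e φ t) (φ, t) (univ ×ˢ Set.Icc (-r) 0))
  refine (this.congr_fderiv (by simp)).congr (fun p _ => ?_) ?_
  · have e1 : A.e (p.1 - φ) p.2 = A.e p.1 p.2 - A.e φ p.2 := map_sub (A.ev p.2) _ _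
    have e2 : A.e (p.1 - φ) t = A.e p.1 t - A.e φ t := map_sub (A.ev t) _ _
    simp only [Pi.add_apply, Pi.sub_apply, e1, e2, ev_apply]
    abel
  · simp [A.ev_apply]

lemma contDiffOn_ev (hr : 0 < r) :
    ContDiffOn ℝ 1 (fun p : X × ℝ => A.e p.1 p.2) (univ ×ˢ Set.Icc (-r) 0) := by
  rw [show (1 : WithTop ℕ∞) = 0 + 1 from rfl,
    contDiffOn_succ_iff_hasFDerivWithinAt_of_uniqueDiffOn
      (uniqueDiffOn_univ.prod (uniqueDiffOn_Icc (by linarith)))]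
  refine ⟨by simp, fun p => (A.ev p.2).comp (ContinuousLinearMap.fst ℝ (X) ℝ) +
        (ContinuousLinearMap.snd ℝ (X) ℝ).smulRight (A.e' p.1 p.2), ?_, ?_⟩
  · rw [contDiffOn_zero]
    refine ContinuousOn.add ?_ ?_
    · refine ContinuousOn.clm_comp ?_ continuousOn_const
      exact A.continuousOn_ev.comp continuousOn_snd (fun p hp => hp.2)
    · have := (ContinuousLinearMap.smulRightL ℝ (X × ℝ) E
        (ContinuousLinearMap.snd ℝ (X) ℝ)).continuous.comp_continuousOn
          A.continuousOn_dv
      exact this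
  · rintro ⟨φ, t⟩ ⟨-, ht⟩
    exact A.hasFDerivWithinAt_ev φ ht


lemma contDiffOn_e (hr : 0 < r) (φ : X) : ContDiffOn ℝ 1 (A.e φ) (Set.Icc (-r) 0) := by
  have h : ContDiffOn ℝ 1 (fun t : ℝ => ((φ, t) : X × ℝ)) (Set.Icc (-r) 0) :=
    (contDiff_const.prodMk contDiff_id).contDiffOn
  exact ContDiffOn.comp (g := fun p : X × ℝ => A.e p.1 p.2) (A.contDiffOn_ev hr) h
    (fun t ht => ⟨mem_univ _, ht⟩)

end EvSys

end helpers1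

section helpers2

open Topology Filter

variable {n kk : ℕ}

/-- the finite-dimensional reduction -/
def Tmap (p : (Fin kk → Fin n → ℝ) × (Fin kk → Fin n → ℝ)) (x : Fin n → ℝ) :
    Fin kk → Fin n → ℝ := fun k ν => p.1 k ν + p.2 k ν * x ν

lemma contDiff_Tmap : ContDiff ℝ 1
    (fun q : ((Fin kk → Fin n → ℝ) × (Fin kk → Fin n → ℝ)) × (Fin n → ℝ) => Tmap q.1 q.2) := by
  unfold Tmap
  fun_prop

lemma norm_smulvec_le (s : Fin kk → Fin n → ℝ) (x : Fin n → ℝ) :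
    ‖(fun k ν => s k ν * x ν : Fin kk → Fin n → ℝ)‖ ≤ ‖s‖ * ‖x‖ := by
  rw [pi_norm_le_iff_of_nonneg (by positivity)]
  intro k
  rw [pi_norm_le_iff_of_nonneg (by positivity)]
  intro ν
  rw [norm_mul]
  exact mul_le_mul ((norm_le_pi_norm (s k) ν).trans (norm_le_pi_norm s k))
    (norm_le_pi_norm x ν) (norm_nonneg _) (norm_nonneg _)

lemma finite_dim_lemma {V : Set (Fin kk → Fin n → ℝ)} (hV : IsOpen V)
    {g : (Fin kk → Fin n → ℝ) → Fin n → ℝ} (hg : ContDiffOn ℝ 1 g V)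
    {a₀ : Fin kk → Fin n → ℝ} (ha : a₀ ∈ V) (M : ℝ) :
    ∃ h : (Fin kk → Fin n → ℝ) × (Fin kk → Fin n → ℝ) → Fin n → ℝ,
      ∀ᶠ p in 𝓝 ((a₀, 0) : (Fin kk → Fin n → ℝ) × (Fin kk → Fin n → ℝ)),
        ContDiffAt ℝ 1 h p ∧ Tmap p (h p) ∈ V ∧ g (Tmap p (h p)) = h p ∧
        ∀ x y, ‖x‖ ≤ M → ‖y‖ ≤ M → g (Tmap p x) = x → g (Tmap p y) = y → x = y := by
  have hga : ContDiffAt ℝ 1 g a₀ := hg.contDiffAt (hV.mem_nhds ha)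
  have hT0 : ∀ x : Fin n → ℝ, Tmap (a₀, 0) x = a₀ := by
    intro x; funext k ν; simp [Tmap]
  let G : ((Fin kk → Fin n → ℝ) × (Fin kk → Fin n → ℝ)) × (Fin n → ℝ) → Fin n → ℝ :=
    fun q => q.2 - g (Tmap q.1 q.2)
  let u : ((Fin kk → Fin n → ℝ) × (Fin kk → Fin n → ℝ)) × (Fin n → ℝ) := ((a₀, 0), g a₀)
  have hG : ContDiffAt ℝ 1 G u := by
    refine contDiffAt_snd.sub (ContDiffAt.comp (g := g) u ?_ contDiff_Tmap.contDiffAt)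
    show ContDiffAt ℝ 1 g (Tmap (a₀, 0) (g a₀))
    rw [hT0]; exact hga
  have hGu : G u = 0 := by
    show g a₀ - g (Tmap (a₀, 0) (g a₀)) = 0
    rw [hT0, sub_self]
  have hid : fderiv ℝ G u ∘L .inr ℝ ((Fin kk → Fin n → ℝ) × (Fin kk → Fin n → ℝ)) (Fin n → ℝ)
      = ContinuousLinearMap.id ℝ (Fin n → ℝ) := by
    have h1 : HasFDerivAt G (fderiv ℝ G u) ((a₀, 0), g a₀) :=
      (hG.differentiableAt one_ne_zero).hasFDerivAt
    have h2 := h1.comp (g a₀) (hasFDerivAt_prodMk_right (𝕜 := ℝ)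
      ((a₀, 0) : (Fin kk → Fin n → ℝ) × (Fin kk → Fin n → ℝ)) (g a₀))
    have h3 : HasFDerivAt (G ∘ fun x => (((a₀, 0) :
        (Fin kk → Fin n → ℝ) × (Fin kk → Fin n → ℝ)), x))
        (ContinuousLinearMap.id ℝ (Fin n → ℝ)) (g a₀) := by
      have : (G ∘ fun x => (((a₀, 0) :
        (Fin kk → Fin n → ℝ) × (Fin kk → Fin n → ℝ)), x)) = fun x => x - g a₀ := by
        funext x
        simp [G, hT0]
      rw [this]
      exact (hasFDerivAt_id _).sub_const _
    exact h2.unique h3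
  have hinv : (fderiv ℝ G u ∘L .inr ℝ ((Fin kk → Fin n → ℝ) × (Fin kk → Fin n → ℝ))
      (Fin n → ℝ)).IsInvertible := by
    rw [hid]
    exact ⟨ContinuousLinearEquiv.refl ℝ _, rfl⟩
  refine ⟨hG.implicitFunction one_ne_zero hinv, ?_⟩
  have c1 := hG.contDiffAt_implicitFunction one_ne_zero hinv
  have c0 := hG.implicitFunction_apply_self one_ne_zero hinv
  have c2 := hG.eventually_apply_implicitFunction one_ne_zero hinv
  set h := hG.implicitFunction one_ne_zero hinv with hh
  have c3 : ∀ᶠ p in 𝓝 u.1, Tmap p (h p) ∈ V := by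
    have hc : ContinuousAt (fun p => Tmap p (h p)) u.1 := by
      have := contDiff_Tmap (n := n) (kk := kk) |>.continuous.continuousAt (x := (u.1, h u.1))
      exact ContinuousAt.comp (f := fun p => (p, h p)) this
        (continuousAt_id.prodMk c1.continuousAt)
    refine hc.eventually_mem (hV.mem_nhds ?_)
    show Tmap (a₀, 0) _ ∈ V
    rw [hT0]; exact ha
  obtain ⟨K, t, ht, hK⟩ := hga.exists_lipschitzOnWith
  obtain ⟨δ, hδ, hball⟩ := Metric.mem_nhds_iff.1 ht
  have c4 : ∀ᶠ p in 𝓝 u.1, ‖p.1 - a₀‖ + ‖p.2‖ * |M| < δ ∧ K * ‖p.2‖ < 1 := by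
    have hc1 : Continuous (fun p : (Fin kk → Fin n → ℝ) × (Fin kk → Fin n → ℝ) =>
      ‖p.1 - a₀‖ + ‖p.2‖ * |M|) := by fun_prop
    have hc2 : Continuous (fun p : (Fin kk → Fin n → ℝ) × (Fin kk → Fin n → ℝ) =>
      (K : ℝ) * ‖p.2‖) := by fun_prop
    exact (hc1.continuousAt.eventually_lt continuousAt_const (by simp [u, hδ])).and
      (hc2.continuousAt.eventually_lt continuousAt_const (by simp [u]))
  have c1' := c1.eventually (by simp)
  filter_upwards [c1', c2, c3, c4] with p p1 p2 p3 p4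
  refine ⟨p1, p3, ?_, ?_⟩
  · rw [hGu] at p2
    exact (sub_eq_zero.1 p2).symm
  · intro x y hx hy ex ey
    have hmem : ∀ x : Fin n → ℝ, ‖x‖ ≤ M → Tmap p x ∈ t := by
      intro x hx
      apply hball
      rw [mem_ball_iff_norm]
      have e : Tmap p x - a₀ = (p.1 - a₀) + (fun k ν => p.2 k ν * x ν) := by
        funext k ν; simp [Tmap]; ring
      rw [e]
      refine lt_of_le_of_lt ((norm_add_le _ _).trans (add_le_add le_rfl
        ((norm_smulvec_le p.2 x).trans ?_))) p4.1
      exact mul_le_mul_of_nonneg_left (hx.trans (le_abs_self M)) (norm_nonneg _)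
    have h1 := hK.norm_sub_le (hmem x hx) (hmem y hy)
    rw [ex, ey] at h1
    have e : Tmap p x - Tmap p y = (fun k ν => p.2 k ν * (x - y) ν) := by
      funext k ν; simp [Tmap]; ring
    rw [e] at h1
    have h2 := h1.trans (mul_le_mul_of_nonneg_left (norm_smulvec_le p.2 (x - y)) K.2)
    by_contra hne
    have hpos : 0 < ‖x - y‖ := norm_pos_iff.2 (sub_ne_zero.2 hne)
    have h3 : ‖x - y‖ ≤ (K * ‖p.2‖) * ‖x - y‖ := by rw [mul_assoc]; exact h2
    nlinarith [p4.2]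

end helpers2

section helpers3

open Topology Filter

variable {r : ℝ} {n kk : ℕ} {F : Type*} [NormedAddCommGroup F] [NormedSpace ℝ F]
  {X : Type*} [NormedAddCommGroup X] [NormedSpace ℝ X]

/-- The gluing step: local solvability implies the diffeomorphism and graph statement. -/
lemma abstract_glue (D : X →L[ℝ] (Fin n → ℝ)) (Y : (Fin n → ℝ) →L[ℝ] X)
    (hDY : ∀ x, D (Y x) = x) (U P : Set X) (f : X → Fin n → ℝ)
    (hloc : ∀ φ₀ ∈ P, ∃ O₁ : Set X, IsOpen O₁ ∧ φ₀ - Y (D φ₀) ∈ O₁ ∧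
      ∃ h : X → Fin n → ℝ, ContDiffOn ℝ 1 h O₁ ∧ ∀ ζ ∈ O₁,
        (ζ + Y (h ζ) ∈ U ∧ f (ζ + Y (h ζ)) = h ζ) ∧
        ∀ x, ζ + Y x ∈ U → f (ζ + Y x) = x → x = h ζ) :
    ∃ O : Set X, IsOpen O ∧ P ⊆ O ∧ ∃ O' : Set X, IsOpen O' ∧
      (fun φ => φ - Y (D φ)) '' ({φ | φ ∈ U ∧ D φ = f φ} ∩ O) = {ζ | D ζ = 0} ∩ O' ∧
      IsC1DiffeoOn (fun φ => φ - Y (D φ)) ({φ | φ ∈ U ∧ D φ = f φ} ∩ O)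
        ({ζ | D ζ = 0} ∩ O') ∧
      ∃ γ : X → X, ContDiffOn ℝ 1 γ ({ζ | D ζ = 0} ∩ O') ∧
        (∀ ζ ∈ {ζ | D ζ = 0} ∩ O', ∃ x, Y x = γ ζ) ∧
        {φ | φ ∈ U ∧ D φ = f φ} ∩ O = (fun ζ => ζ + γ ζ) '' ({ζ | D ζ = 0} ∩ O') := by
  classical
  choose! O₁ hopen hmem h hsm hsol using hloc
  let O' : Set X := ⋃ φ ∈ P, O₁ φ
  have hO' : IsOpen O' := isOpen_biUnion hopen
  have hex : ∀ ζ ∈ O', ∃ x, (ζ + Y x ∈ U ∧ f (ζ + Y x) = x) ∧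
      ∀ y, ζ + Y y ∈ U → f (ζ + Y y) = y → y = x := by
    intro ζ hζ
    obtain ⟨φ, hφ, hζφ⟩ := mem_iUnion₂.1 hζ
    exact ⟨h φ ζ, hsol φ hφ ζ hζφ⟩
  choose! x hx hxu using hex
  have hxs : ContDiffOn ℝ 1 x O' := by
    intro ζ hζ
    obtain ⟨φ, hφ, hζφ⟩ := mem_iUnion₂.1 hζ
    have h1 : ContDiffAt ℝ 1 (h φ) ζ :=
      (hsm φ hφ).contDiffAt ((hopen φ hφ).mem_nhds hζφ)
    refine (h1.congr_of_eventuallyEq ?_).contDiffWithinAt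
    filter_upwards [(hopen φ hφ).mem_nhds hζφ] with ζ' hζ'
    have hm : ζ' ∈ O' := mem_iUnion₂.2 ⟨φ, hφ, hζ'⟩
    exact (hsol φ hφ ζ' hζ').2 _ (hx ζ' hm).1 (hx ζ' hm).2
  let R : X → X := fun φ => φ - Y (D φ)
  have hRs : ContDiff ℝ 1 R := contDiff_id.sub (Y.contDiff.comp D.contDiff)
  have hDR : ∀ φ, D (R φ) = 0 := by intro φ; simp [R, hDY]
  have hRadd : ∀ φ, R φ + Y (D φ) = φ := by intro φ; simp [R]
  have hRinv : ∀ ζ y, D ζ = 0 → R (ζ + Y y) = ζ := by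
    intro ζ y hζ; simp [R, hζ, hDY]
  let γ : X → X := fun ζ => Y (x ζ)
  have hγs : ContDiffOn ℝ 1 γ O' := Y.contDiff.comp_contDiffOn hxs
  -- forward and backward
  have fwd : ∀ φ, φ ∈ U → D φ = f φ → R φ ∈ O' → R φ + γ (R φ) = φ := by
    intro φ hφ hD hR
    have := hxu (R φ) hR (D φ) (by rw [hRadd]; exact hφ) (by rw [hRadd]; exact hD.symm)
    show R φ + Y (x (R φ)) = φ
    rw [← this, hRadd]
  have bwd : ∀ ζ, D ζ = 0 → ζ ∈ O' → (ζ + γ ζ ∈ U ∧ D (ζ + γ ζ) = f (ζ + γ ζ)) ∧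
      R (ζ + γ ζ) = ζ := by
    intro ζ hζ hm
    refine ⟨⟨(hx ζ hm).1, ?_⟩, hRinv ζ _ hζ⟩
    show D (ζ + Y (x ζ)) = f (ζ + Y (x ζ))
    rw [(hx ζ hm).2, map_add, hζ, hDY, zero_add]
  have him : R '' ({φ | φ ∈ U ∧ D φ = f φ} ∩ R ⁻¹' O') = {ζ | D ζ = 0} ∩ O' := by
    ext ζ; constructor
    · rintro ⟨φ, ⟨-, hφ⟩, rfl⟩
      exact ⟨hDR φ, hφ⟩
    · rintro ⟨hζ, hm⟩
      obtain ⟨h1, h2⟩ := bwd ζ hζ hm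
      refine ⟨ζ + γ ζ, ⟨h1, ?_⟩, h2⟩
      show R _ ∈ O'
      rw [h2]; exact hm
  have hli : LeftInvOn (fun ζ => ζ + γ ζ) R ({φ | φ ∈ U ∧ D φ = f φ} ∩ R ⁻¹' O') := by
    rintro φ ⟨⟨h1, h2⟩, h3⟩
    exact fwd φ h1 h2 h3
  refine ⟨R ⁻¹' O', hO'.preimage hRs.continuous,
    fun φ hφ => mem_iUnion₂.2 ⟨φ, hφ, hmem φ hφ⟩, O', hO', him,
    ⟨hRs.contDiffOn, hli.injOn, him, fun ζ => ζ + γ ζ,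
      contDiffOn_id.add (hγs.mono inter_subset_right), hli, ?_⟩,
    γ, hγs.mono inter_subset_right, fun ζ _ => ⟨x ζ, rfl⟩, ?_⟩
  · rintro ζ ⟨hζ, hm⟩
    exact (bwd ζ hζ hm).2
  · rw [← him, image_image]
    ext φ; constructor
    · intro hφ
      exact ⟨φ, hφ, hli hφ⟩
    · rintro ⟨φ', hφ', rfl⟩
      have := hli hφ'
      simp only at this ⊢
      rw [this]; exact hφ'

lemma abstract_main (hr : 0 < r) (A : EvSys r X (Fin n → ℝ)) (L : X →L[ℝ] F)
    {W : Set F} (hW : IsOpen W) {d : Fin kk → F → ℝ} (hd : ∀ k, ContDiffOn ℝ 1 (d k) W)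
    (hdm : ∀ k, ∀ w ∈ W, d k w ∈ Set.Icc (0 : ℝ) r)
    {V : Set (Fin kk → Fin n → ℝ)} (hV : IsOpen V)
    {g : (Fin kk → Fin n → ℝ) → Fin n → ℝ} (hg : ContDiffOn ℝ 1 g V)
    (ψ : Fin n → ℝ → ℝ) (hψs : ∀ ν, ContDiffOn ℝ 1 (ψ ν) (Set.Icc (-r) 0))
    (hψ0 : ∀ ν, ψ ν 0 = 0) (Y : (Fin n → ℝ) →L[ℝ] X)
    (hYe : ∀ x t, A.e (Y x) t = fun ν => ψ ν t * x ν) (hYL : ∀ x, L (Y x) = 0)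
    (hat : X → Fin kk → Fin n → ℝ) (hhat : ∀ φ k, hat φ k = A.e φ (-(d k (L φ))))
    (U : Set X) (hU : ∀ φ, φ ∈ U ↔ L φ ∈ W ∧ hat φ ∈ V) (k₀ : Fin kk)
    (hyp : (∃ M, ∀ v ∈ V, ‖g v‖ ≤ M) ∨
      ((∀ w ∈ W, d k₀ w = 0) ∧ ∀ B : Set (Fin n → ℝ), Bornology.IsBounded B →
        Bornology.IsBounded (g '' {v | v ∈ V ∧ v k₀ ∈ B})) ∨
      (∀ φ ∈ U, ∀ k, d k (L φ) = 0))
    (φ₀ : X) (hφU : φ₀ ∈ U) (hφ0 : ∀ k, d k (L φ₀) = 0) (x₀ : Fin n → ℝ) :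
    ∃ O₁ : Set X, IsOpen O₁ ∧ φ₀ - Y x₀ ∈ O₁ ∧
      ∃ h : X → Fin n → ℝ, ContDiffOn ℝ 1 h O₁ ∧ ∀ ζ ∈ O₁,
        (ζ + Y (h ζ) ∈ U ∧ g (hat (ζ + Y (h ζ))) = h ζ) ∧
        ∀ x, ζ + Y x ∈ U → g (hat (ζ + Y x)) = x → x = h ζ := by
  let p : X → (Fin kk → Fin n → ℝ) × (Fin kk → Fin n → ℝ) :=
    fun ζ => (hat ζ, fun k ν => ψ ν (-(d k (L ζ))))
  have hLadd : ∀ ζ x, L (ζ + Y x) = L ζ := by intro ζ x; rw [map_add, hYL, add_zero]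
  have hT : ∀ ζ x, hat (ζ + Y x) = Tmap (p ζ) x := by
    intro ζ x; funext k ν
    simp only [hhat, hLadd, A.e_add, hYe, Tmap, p, Pi.add_apply]
  have hUadd : ∀ ζ x, ζ + Y x ∈ U ↔ L ζ ∈ W ∧ Tmap (p ζ) x ∈ V := by
    intro ζ x; rw [hU, hT, hLadd]
  have hΩ : IsOpen (L ⁻¹' W) := hW.preimage L.continuous
  have hdL : ∀ k, ContDiffOn ℝ 1 (fun ζ => -(d k (L ζ))) (L ⁻¹' W) := by
    intro k
    exact ((hd k).comp L.contDiff.contDiffOn (fun ζ hζ => hζ)).neg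
  have hdI : ∀ k, MapsTo (fun ζ => -(d k (L ζ))) (L ⁻¹' W) (Set.Icc (-r) 0) := by
    intro k ζ hζ
    have := hdm k _ hζ
    exact ⟨by linarith [this.2], by linarith [this.1]⟩
  have hhats : ContDiffOn ℝ 1 hat (L ⁻¹' W) := by
    rw [contDiffOn_pi]
    intro k
    have : ContDiffOn ℝ 1 (fun ζ => A.e ζ (-(d k (L ζ)))) (L ⁻¹' W) :=
      ContDiffOn.comp (g := fun q : X × ℝ => A.e q.1 q.2) (A.contDiffOn_ev hr)
        (contDiffOn_id.prodMk (hdL k)) (fun ζ hζ => ⟨mem_univ _, hdI k hζ⟩)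
    exact this.congr (fun ζ _ => hhat ζ k)
  have hps : ContDiffOn ℝ 1 p (L ⁻¹' W) := by
    refine hhats.prodMk ?_
    rw [contDiffOn_pi]; intro k
    rw [contDiffOn_pi]; intro ν
    exact (hψs ν).comp (hdL k) (hdI k)
  set ζ₀ := φ₀ - Y x₀ with hζ₀
  have hφζ : φ₀ = ζ₀ + Y x₀ := by simp [ζ₀]
  have hLζ : L ζ₀ = L φ₀ := by rw [hφζ, hLadd]
  have hζW : ζ₀ ∈ L ⁻¹' W := by
    show L ζ₀ ∈ W
    rw [hLζ]; exact ((hU φ₀).1 hφU).1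
  have hp0 : p ζ₀ = (hat ζ₀, 0) := by
    refine Prod.ext rfl ?_
    funext k ν
    simp [p, hLζ, hφ0, hψ0]
  have ha : hat ζ₀ ∈ V := by
    have h1 := ((hUadd ζ₀ x₀).1 (hφζ ▸ hφU)).2
    rw [hp0] at h1
    convert h1 using 1
    funext k ν; simp [Tmap]
  -- boundedness
  have hbd : ∃ M, ∀ᶠ ζ in 𝓝 ζ₀, ∀ x, ζ + Y x ∈ U → ‖g (hat (ζ + Y x))‖ ≤ M := by
    rcases hyp with ⟨M, hM⟩ | ⟨hd0, hB⟩ | hK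
    · exact ⟨M, Eventually.of_forall fun ζ x hx => hM _ ((hU _).1 hx).2⟩
    · obtain ⟨M, hM⟩ := (hB (Metric.ball (A.e ζ₀ 0) 1) Metric.isBounded_ball).exists_norm_le
      refine ⟨M, ?_⟩
      have hc : ∀ᶠ ζ in 𝓝 ζ₀, A.ev 0 ζ ∈ Metric.ball (A.e ζ₀ 0) 1 :=
        (A.ev 0).continuous.continuousAt.eventually_mem
          (Metric.isOpen_ball.mem_nhds (Metric.mem_ball_self one_pos))
      filter_upwards [hc] with ζ hζ x hx
      refine hM _ ⟨_, ⟨((hU _).1 hx).2, ?_⟩, rfl⟩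
      have : hat (ζ + Y x) k₀ = A.e ζ 0 := by
        rw [hhat, hd0 _ ((hU _).1 hx).1, neg_zero, A.e_add, hYe]
        funext ν; simp [hψ0]
      rw [this]; exact hζ
    · refine ⟨‖g (hat ζ₀)‖ + 1, ?_⟩
      have hc : ContinuousAt (fun ζ => ‖g (hat ζ)‖) ζ₀ := by
        have h1 : ContinuousAt hat ζ₀ := (hhats.contDiffAt (hΩ.mem_nhds hζW)).continuousAt
        have h2 : ContinuousAt g (hat ζ₀) := (hg.contDiffAt (hV.mem_nhds ha)).continuousAt
        exact (ContinuousAt.comp (g := g) h2 h1).norm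
      filter_upwards [hc.eventually_lt continuousAt_const (lt_add_one _)] with ζ hζ x hx
      have : hat (ζ + Y x) = hat ζ := by
        have h0 := hK _ hx
        funext k ν
        rw [hLadd] at h0
        simp [hhat, hLadd, h0, A.e_add, hYe, hψ0]
      rw [this]; exact hζ.le
  obtain ⟨M, hM⟩ := hbd
  obtain ⟨h, hh⟩ := finite_dim_lemma hV hg ha M
  rw [← hp0] at hh
  have hpc : ContinuousAt p ζ₀ := (hps.contDiffAt (hΩ.mem_nhds hζW)).continuousAt
  have hev := ((hpc.eventually hh).and hM).and (hΩ.mem_nhds hζW)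
  obtain ⟨O₁, hO₁, hopen, hmem⟩ := _root_.mem_nhds_iff.1 hev
  refine ⟨O₁, hopen, hmem, fun ζ => h (p ζ), ?_, ?_⟩
  · intro ζ hζ
    obtain ⟨⟨⟨h1, -⟩, -⟩, h3⟩ := hO₁ hζ
    exact (ContDiffAt.comp (g := h) ζ h1
      (hps.contDiffAt (hΩ.mem_nhds h3))).contDiffWithinAt
  · intro ζ hζ
    obtain ⟨⟨⟨-, h2, h3, h4⟩, h5⟩, h6⟩ := hO₁ hζ
    have hs : ζ + Y (h (p ζ)) ∈ U := (hUadd _ _).2 ⟨h6, h2⟩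
    have he : g (hat (ζ + Y (h (p ζ)))) = h (p ζ) := by rw [hT]; exact h3
    refine ⟨⟨hs, he⟩, fun x hx hgx => ?_⟩
    refine h4 x _ ?_ ?_ ?_ h3
    · rw [← hgx]; exact h5 x hx
    · have h7 := h5 _ hs
      rw [he] at h7
      exact h7
    · rw [← hT]; exact hgx

end helpers3

section helpers4

open Topology Filter

variable {r : ℝ} {E : Type*} [NormedAddCommGroup E] [NormedSpace ℝ E]

lemma norm_evC_le (φ : C1 r E) (t : ℝ) : ‖evC φ t‖ ≤ ‖φ‖ := by
  unfold evC extFun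
  split_ifs with h
  · exact (φ.1.1.norm_coe_le_norm ⟨t, h⟩).trans (norm_fst_le φ.1)
  · simp

lemma norm_dvC_le (φ : C1 r E) (t : ℝ) : ‖dvC φ t‖ ≤ ‖φ‖ := by
  unfold dvC extFun
  split_ifs with h
  · exact (φ.1.2.norm_coe_le_norm ⟨t, h⟩).trans (norm_snd_le φ.1)
  · simp

/-- The evaluation structure of `C¹([-r,0],E)`. -/
def c1Sys (r : ℝ) (E : Type*) [NormedAddCommGroup E] [NormedSpace ℝ E] :
    EvSys r (C1 r E) E where
  e := evC
  e' := dvC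
  e_add φ χ t := by simp [evC, extFun_add]
  e_smul c φ t := by simp [evC, extFun_smul]
  e'_add φ χ t := by simp [dvC, extFun_add]
  e'_smul c φ t := by simp [dvC, extFun_smul]
  e_le := norm_evC_le
  e'_le := norm_dvC_le
  deriv φ t ht := φ.2 t ht
  cont φ := by
    rw [continuousOn_iff_continuous_restrict]
    refine φ.1.2.continuous.congr fun t => ?_
    have ht : (t : ℝ) ∈ Icc0 r := t.2
    have h8 : extFun φ.1.2 (t : ℝ) = φ.1.2 t := by
      unfold extFun
      rw [dif_pos ht]
    exact h8.symm

lemma evC_singleC1 {n : ℕ} (ν : Fin n) (φ : C1 r ℝ) (t : ℝ) :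
    evC (singleC1 ν φ) t = Pi.single ν (evC φ t) := by
  show extFun (CMsingle ν φ.1.1) t = _
  rw [extFun_CMsingle]
  funext j
  by_cases h : j = ν
  · subst h; simp [sCLM, evC]
  · simp [sCLM, h]

lemma dvC_singleC1 {n : ℕ} (ν : Fin n) (φ : C1 r ℝ) (t : ℝ) :
    dvC (singleC1 ν φ) t = Pi.single ν (dvC φ t) := by
  show extFun (CMsingle ν φ.1.2) t = _
  rw [extFun_CMsingle]
  funext j
  by_cases h : j = ν
  · subst h; simp [sCLM, dvC]
  · simp [sCLM, h]

/-- evaluation as linear map -/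
def evLin (r : ℝ) (E : Type*) [NormedAddCommGroup E] [NormedSpace ℝ E] (t : ℝ) :
    C1 r E →ₗ[ℝ] E where
  toFun φ := evC φ t
  map_add' φ χ := (c1Sys r E).e_add φ χ t
  map_smul' c φ := (c1Sys r E).e_smul c φ t

/-- evaluation of derivative as linear map -/
def dvLin (r : ℝ) (E : Type*) [NormedAddCommGroup E] [NormedSpace ℝ E] (t : ℝ) :
    C1 r E →ₗ[ℝ] E where
  toFun φ := dvC φ t
  map_add' φ χ := (c1Sys r E).e'_add φ χ t
  map_smul' c φ := (c1Sys r E).e'_smul c φ t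

lemma evC_Ymap {n : ℕ} (ψ : Fin n → C1 r ℝ) (x : Fin n → ℝ) (t : ℝ) :
    evC (Ymap ψ x) t = fun ν => evC (ψ ν) t * x ν := by
  have h : evC (Ymap ψ x) t = ∑ ν, x ν • evC (singleC1 ν (ψ ν)) t := by
    show evLin r _ t (∑ ν, x ν • singleC1 ν (ψ ν)) = _
    rw [map_sum]
    simp only [map_smul]
    rfl
  rw [h]
  funext j
  simp [evC_singleC1, Finset.sum_apply, Pi.single_apply, mul_comm]

lemma dvC_Ymap {n : ℕ} (ψ : Fin n → C1 r ℝ) (x : Fin n → ℝ) (t : ℝ) :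
    dvC (Ymap ψ x) t = fun ν => dvC (ψ ν) t * x ν := by
  have h : dvC (Ymap ψ x) t = ∑ ν, x ν • dvC (singleC1 ν (ψ ν)) t := by
    show dvLin r _ t (∑ ν, x ν • singleC1 ν (ψ ν)) = _
    rw [map_sum]
    simp only [map_smul]
    rfl
  rw [h]
  funext j
  simp [dvC_singleC1, Finset.sum_apply, Pi.single_apply, mul_comm]

end helpers4

section helpers5

variable {r : ℝ} {n kk : ℕ} {F : Type*} [NormedAddCommGroup F] [NormedSpace ℝ F]
  {X : Type*} [NormedAddCommGroup X] [NormedSpace ℝ X]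

lemma abstract_final (hr : 0 < r) (A : EvSys r X (Fin n → ℝ)) (L : X →ₗ[ℝ] F)
    (hL : ∃ C, ∀ φ, ‖L φ‖ ≤ C * ‖φ‖)
    {W : Set F} (hW : IsOpen W) {d : Fin kk → F → ℝ} (hd : ∀ k, ContDiffOn ℝ 1 (d k) W)
    (hdm : ∀ k, ∀ w ∈ W, d k w ∈ Set.Icc (0 : ℝ) r)
    {V : Set (Fin kk → Fin n → ℝ)} (hV : IsOpen V)
    {g : (Fin kk → Fin n → ℝ) → Fin n → ℝ} (hg : ContDiffOn ℝ 1 g V)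
    (ψ : Fin n → ℝ → ℝ) (hψs : ∀ ν, ContDiffOn ℝ 1 (ψ ν) (Set.Icc (-r) 0))
    (hψ0 : ∀ ν, ψ ν 0 = 0) (Y : (Fin n → ℝ) →ₗ[ℝ] X)
    (hYe : ∀ x t, A.e (Y x) t = fun ν => ψ ν t * x ν) (hYL : ∀ x, L (Y x) = 0)
    (hYD : ∀ x, A.e' (Y x) 0 = x)
    (hat : X → Fin kk → Fin n → ℝ) (hhat : ∀ φ k, hat φ k = A.e φ (-(d k (L φ))))
    (U : Set X) (hU : ∀ φ, φ ∈ U ↔ L φ ∈ W ∧ hat φ ∈ V) (k₀ : Fin kk)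
    (hyp : (∃ M, ∀ v ∈ V, ‖g v‖ ≤ M) ∨
      ((∀ w ∈ W, d k₀ w = 0) ∧ ∀ B : Set (Fin n → ℝ), Bornology.IsBounded B →
        Bornology.IsBounded (g '' {v | v ∈ V ∧ v k₀ ∈ B})) ∨
      (∀ φ ∈ U, ∀ k, d k (L φ) = 0)) :
    ∃ O : Set X, IsOpen O ∧ {φ | φ ∈ U ∧ ∀ k, d k (L φ) = 0} ⊆ O ∧ ∃ O' : Set X, IsOpen O' ∧
      (fun φ => φ - Y (A.e' φ 0)) '' ({φ | φ ∈ U ∧ A.e' φ 0 = g (hat φ)} ∩ O)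
        = {ζ | A.e' ζ 0 = 0} ∩ O' ∧
      IsC1DiffeoOn (fun φ => φ - Y (A.e' φ 0)) ({φ | φ ∈ U ∧ A.e' φ 0 = g (hat φ)} ∩ O)
        ({ζ | A.e' ζ 0 = 0} ∩ O') ∧
      ∃ γ : X → X, ContDiffOn ℝ 1 γ ({ζ | A.e' ζ 0 = 0} ∩ O') ∧
        (∀ ζ ∈ {ζ | A.e' ζ 0 = 0} ∩ O', ∃ x, Y x = γ ζ) ∧
        {φ | φ ∈ U ∧ A.e' φ 0 = g (hat φ)} ∩ O =
          (fun ζ => ζ + γ ζ) '' ({ζ | A.e' ζ 0 = 0} ∩ O') := by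
  obtain ⟨C, hC⟩ := hL
  let L' : X →L[ℝ] F := L.mkContinuous C hC
  let Y' : (Fin n → ℝ) →L[ℝ] X := LinearMap.toContinuousLinearMap Y
  exact abstract_glue (A.dv 0) Y' hYD U {φ | φ ∈ U ∧ ∀ k, d k (L φ) = 0}
    (fun φ => g (hat φ)) (fun φ₀ hφ₀ => abstract_main hr A L' hW hd hdm hV hg ψ hψs hψ0 Y'
      hYe hYL hat hhat U hU k₀ hyp φ₀ hφ₀.1 hφ₀.2 _)

end helpers5

variable {r : ℝ} {n kk : ℕ} {F : Type*} [NormedAddCommGroup F] [NormedSpace ℝ F]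
  [FiniteDimensional ℝ F]

/-- Theorem 3.5 (i): there is an open neighbourhood `N_K` of `X_{fK}` in `X_f` on which `R^K`
restricts to a diffeomorphism onto an open subset of `X₀`, and `N_K` is a graph over `X₀`
with respect to the complement `Q_K`. -/
theorem statement7 (hr : 0 < r) (hk : 0 < kk) (S : Setting r n kk F)
    (hUK : (S.UJ (Finset.univ : Finset (Fin kk))).Nonempty)
    (z : ℝ) (hz : z ∈ Set.Ioo (-r) 0) (ψ : Fin n → C1 r ℝ)
    (hψL : ∀ ν, S.L (singleC1 ν (ψ ν)).1.1 = 0)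
    (hψ0 : ∀ ν, evC (ψ ν) 0 = 0)
    (hψ1 : ∀ ν, dvC (ψ ν) 0 = 1)
    (hψz : ∀ ν, ∀ t ∈ Set.Icc (-r) z, evC (ψ ν) t = 0)
    (hyp : S.HypB ∨ S.HypD1B hk ∨ S.U = S.UJ (Finset.univ : Finset (Fin kk))) :
    ∃ N O : Set (C1 r (Fin n → ℝ)), IsOpen O ∧ N = S.Xf ∩ O ∧
      S.XfJ (Finset.univ : Finset (Fin kk)) ⊆ N ∧
      (∃ O', IsOpen O' ∧ RKmap ψ '' N = (X0sub r n : Set (C1 r (Fin n → ℝ))) ∩ O') ∧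
      IsC1DiffeoOn (RKmap ψ) N (RKmap ψ '' N) ∧
      ∃ (dm : Set (C1 r (Fin n → ℝ))) (γ : C1 r (Fin n → ℝ) → C1 r (Fin n → ℝ)),
        dm ⊆ (X0sub r n : Set (C1 r (Fin n → ℝ))) ∧ ContDiffOn ℝ 1 γ dm ∧
        (∀ ζ ∈ dm, γ ζ ∈ LinearMap.range (Ymap ψ)) ∧
        N = (fun ζ => ζ + γ ζ) '' dm := by
  have hYL : ∀ x, S.L (Ymap ψ x).1.1 = 0 := by
    intro x
    let L1 : C1 r (Fin n → ℝ) →ₗ[ℝ] F :=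
      { toFun := fun φ => S.L φ.1.1
        map_add' := fun φ χ => map_add S.L φ.1.1 χ.1.1
        map_smul' := fun c φ => map_smul S.L c φ.1.1 }
    show L1 (∑ ν, x ν • singleC1 ν (ψ ν)) = 0
    rw [map_sum]
    refine Finset.sum_eq_zero fun ν _ => ?_
    rw [map_smul]
    show x ν • S.L (singleC1 ν (ψ ν)).1.1 = 0
    rw [hψL, smul_zero]
  have hyp' : (∃ M, ∀ v ∈ S.V, ‖S.g v‖ ≤ M) ∨
      ((∀ w ∈ S.W, S.d ⟨0, hk⟩ w = 0) ∧ ∀ B : Set (Fin n → ℝ), Bornology.IsBounded B →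
        Bornology.IsBounded (S.g '' {v | v ∈ S.V ∧ v ⟨0, hk⟩ ∈ B})) ∨
      (∀ φ ∈ S.U, ∀ k, S.d k (S.L φ.1.1) = 0) := by
    rcases hyp with h | h | h
    · exact Or.inl h
    · exact Or.inr (Or.inl h)
    · refine Or.inr (Or.inr fun φ hφ k => ?_)
      rw [h] at hφ
      exact hφ.2.2.1 k (Finset.mem_univ k)
  obtain ⟨O, hO, hsub, O', hO', him, hdiff, γ, hγ, hγY, hN⟩ :=
    abstract_final (X := C1 r (Fin n → ℝ)) hr (c1Sys r (Fin n → ℝ))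
      { toFun := fun φ => S.L φ.1.1
        map_add' := fun φ χ => map_add S.L φ.1.1 χ.1.1
        map_smul' := fun c φ => map_smul S.L c φ.1.1 }
      ⟨‖S.L‖, fun φ => (S.L.le_opNorm φ.1.1).trans
        (mul_le_mul_of_nonneg_left (norm_fst_le φ.1) (norm_nonneg _))⟩
      S.Wopen S.d_smooth S.d_mem S.Vopen S.g_smooth (fun ν => evC (ψ ν))
      (fun ν => (c1Sys r ℝ).contDiffOn_e hr (ψ ν)) hψ0 (Ymap ψ)
      (fun x t => evC_Ymap ψ x t) hYL
      (fun x => by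
        show dvC (Ymap ψ x) 0 = x
        rw [dvC_Ymap]; funext ν; rw [hψ1, one_mul])
      S.hat (fun φ k => rfl) S.U (fun φ => Iff.rfl) ⟨0, hk⟩ hyp'
  refine ⟨S.Xf ∩ O, O, hO, rfl, ?_, ⟨O', hO', him⟩, ?_,
    (X0sub r n : Set (C1 r (Fin n → ℝ))) ∩ O', γ, inter_subset_left, hγ, hγY, hN⟩
  · rintro φ ⟨h1, h2⟩
    exact ⟨h1, hsub ⟨h1.1, fun k => h2.2.2.1 k (Finset.mem_univ k)⟩⟩
  · have e : RKmap ψ '' (S.Xf ∩ O) = (X0sub r n : Set (C1 r (Fin n → ℝ))) ∩ O' := him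
    rw [e]
    exact hdiff
end
end
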